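/- Let P ⊆ ℝ^d be a d-dimensional simplicial reflexive polytope with d ≥ 3 and exactly 3d−1 vertices, and suppose ν_P = 0. Then either d is even and P splits into (d−2)/2 copies of V2 and one copy of the pentagon E2, or d is odd and P splits into (d−3)/2 copies of V2 and one copy of the 3-polytope Q3. -/

import Mathlib

noncomputable section

/-- The standard inner product on `ℝ^d`. -/
def dotp {d : ℕ} (x y : Fin d → ℝ) : ℝ := ∑ i, x i * y i

/-- `x` is a point of the lattice `ℤ^d`. -/
def IsLP {d : ℕ} (x : Fin d → ℝ) : Prop := ∀ i, ∃ n : ℤ, x i = (n : ℝ)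

/-- A lattice polytope: convex hull of finitely many lattice points. -/
def IsLatticePolytope {d : ℕ} (P : Set (Fin d → ℝ)) : Prop :=
  ∃ V : Finset (Fin d → ℝ), (∀ v ∈ V, IsLP v) ∧ P = convexHull ℝ (V : Set (Fin d → ℝ))

/-- The dual polytope `P* = {x | ⟨x,y⟩ ≤ 1 ∀ y ∈ P}`. -/
def dualPolytope {d : ℕ} (P : Set (Fin d → ℝ)) : Set (Fin d → ℝ) :=
  {x | ∀ y ∈ P, dotp x y ≤ 1}

/-- `P` is a reflexive polytope: a (`d`-dimensional) lattice polytope with `0` in its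
interior whose dual is again a lattice polytope. -/
def IsReflexive {d : ℕ} (P : Set (Fin d → ℝ)) : Prop :=
  IsLatticePolytope P ∧ (0 : Fin d → ℝ) ∈ interior P ∧ IsLatticePolytope (dualPolytope P)

/-- `F` is a facet of `P` with (uniquely determined) outer normal `u`, normalized by
`⟨u, F⟩ = 1` (possible since `0` is in the interior of `P`). -/
def IsFacetNormal {d : ℕ} (P F : Set (Fin d → ℝ)) (u : Fin d → ℝ) : Prop :=
  F.Nonempty ∧ (∀ y ∈ P, dotp u y ≤ 1) ∧ F = {y ∈ P | dotp u y = 1} ∧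
    Module.finrank ℝ (vectorSpan ℝ F) = d - 1

/-- `F` is a facet of `P`. -/
def IsFacet {d : ℕ} (P F : Set (Fin d → ℝ)) : Prop := ∃ u, IsFacetNormal P F u

/-- `P` is simplicial: every facet has exactly `d` vertices. -/
def IsSimplicial {d : ℕ} (P : Set (Fin d → ℝ)) : Prop :=
  ∀ F, IsFacet P F → (Set.extremePoints ℝ F).ncard = d

/-- Vertices of the hexagon `V₂`. -/
def V2v : Set (Fin 2 → ℤ) := {![1,0], ![0,1], ![1,1], ![-1,0], ![0,-1], ![-1,-1]}

/-- Vertices of the pentagon `Ṽ₂`. -/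
def tV2v : Set (Fin 2 → ℤ) := {![1,0], ![0,1], ![1,1], ![-1,0], ![0,-1]}

/-- Vertices of the pentagon `E₁`. -/
def E1v : Set (Fin 2 → ℤ) := {![1,0], ![-1,2], ![-1,1], ![0,-1], ![1,-1]}

/-- Vertices of the pentagon `E₂`. -/
def E2v : Set (Fin 2 → ℤ) := {![1,0], ![0,1], ![-1,1], ![-1,-1], ![1,-1]}

/-- Vertices of the 3-polytope `Q₃`. -/
def Q3v : Set (Fin 3 → ℤ) :=
  {![1,0,0], ![-1,0,0], ![0,1,0], ![0,-1,0], ![1,1,0], ![-1,-1,0], ![0,0,1], ![0,0,-1]}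

/-- Vertices of the 3-polytope `Q₃'`. -/
def Q3'v : Set (Fin 3 → ℤ) :=
  {![1,0,0], ![-1,0,0], ![0,1,0], ![0,-1,0], ![1,1,0], ![-1,-1,0], ![0,0,1], ![1,0,-1]}

/-- Embed `ℤ²` into coordinates `o, o+1` of `ℝ^d`. -/
def embed2 (d o : ℕ) (v : Fin 2 → ℤ) : Fin d → ℝ :=
  fun i => if (i : ℕ) = o then (v 0 : ℝ) else if (i : ℕ) = o + 1 then (v 1 : ℝ) else 0

/-- Embed `ℤ³` into coordinates `0, 1, 2` of `ℝ^d`. -/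
def embed3 (d : ℕ) (v : Fin 3 → ℤ) : Fin d → ℝ :=
  fun i => if (i : ℕ) = 0 then (v 0 : ℝ) else if (i : ℕ) = 1 then (v 1 : ℝ)
    else if (i : ℕ) = 2 then (v 2 : ℝ) else 0

/-- Standard model of a polytope in `ℝ^d` that splits into a polygon with vertex set `Q`
(in coordinates `0,1`) and `(d-2)/2` copies of `V₂` (in the remaining coordinate pairs). -/
def splitModel2 (d : ℕ) (Q : Set (Fin 2 → ℤ)) : Set (Fin d → ℝ) :=
  convexHull ℝ (embed2 d 0 '' Q ∪ ⋃ j ∈ Finset.range ((d - 2) / 2), embed2 d (2 * j + 2) '' V2v)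

/-- Standard model of a polytope in `ℝ^d` that splits into a 3-polytope with vertex set `Q`
(in coordinates `0,1,2`) and `(d-3)/2` copies of `V₂` (in the remaining coordinate pairs). -/
def splitModel3 (d : ℕ) (Q : Set (Fin 3 → ℤ)) : Set (Fin d → ℝ) :=
  convexHull ℝ (embed3 d '' Q ∪ ⋃ j ∈ Finset.range ((d - 3) / 2), embed2 d (2 * j + 3) '' V2v)

/-- Standard model of a polytope in `ℝ^d` that splits into `d/2` copies of `V₂`. -/
def splitModelV2 (d : ℕ) : Set (Fin d → ℝ) :=
  convexHull ℝ (⋃ j ∈ Finset.range (d / 2), embed2 d (2 * j) '' V2v)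

/-- `φ` is a unimodular transformation: a linear automorphism of `ℝ^d` mapping the lattice
`ℤ^d` onto itself. `P` splits into given polytopes iff some unimodular transformation maps `P`
onto the corresponding standard model. -/
def Unimodular {d : ℕ} (φ : (Fin d → ℝ) ≃ₗ[ℝ] (Fin d → ℝ)) : Prop :=
  ∀ x, IsLP x ↔ IsLP (φ x)



/-- Level function of a simplex facet: the functional with value `1` on the basis. -/
def lev {d : ℕ} (B : Module.Basis (Fin d) ℝ (Fin d → ℝ)) : (Fin d → ℝ) →ₗ[ℝ] ℝ :=
  ∑ i, B.coord i

lemma lev_apply {d : ℕ} (B : Module.Basis (Fin d) ℝ (Fin d → ℝ)) (v : Fin d → ℝ) :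
    lev B v = ∑ i, B.repr v i := by
  simp [lev]

lemma lev_self {d : ℕ} (B : Module.Basis (Fin d) ℝ (Fin d → ℝ)) (i : Fin d) :
    lev B (B i) = 1 := by
  classical
  rw [lev_apply]
  simp [Finsupp.single_apply]

lemma lev_unique {d : ℕ} (B : Module.Basis (Fin d) ℝ (Fin d → ℝ))
    (f : (Fin d → ℝ) →ₗ[ℝ] ℝ) (h : ∀ i, f (B i) = 1) : lev B = f :=
  B.ext fun i => by rw [lev_self, h]

/-- `B` is the vertex set of a (simplex) facet, with integral normal. -/
structure IsFac {d : ℕ} (V : Finset (Fin d → ℝ)) (B : Module.Basis (Fin d) ℝ (Fin d → ℝ)) :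
    Prop where
  mem : ∀ i, B i ∈ V
  le : ∀ v ∈ V, lev B v ≤ 1
  tight : ∀ v ∈ V, lev B v = 1 → ∃ i, v = B i
  int : ∀ v, IsLP v → ∃ n : ℤ, lev B v = n

/-- `dotp` as a linear map -/
def dotL {d : ℕ} (u : Fin d → ℝ) : (Fin d → ℝ) →ₗ[ℝ] ℝ where
  toFun := dotp u
  map_add' x y := by simp [dotp, mul_add, Finset.sum_add_distrib]
  map_smul' r x := by simp only [dotp, Finset.mul_sum, Pi.smul_apply, smul_eq_mul, RingHom.id_apply]
                      exact Finset.sum_congr rfl fun i _ => by ring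

lemma dotL_apply {d : ℕ} (u x : Fin d → ℝ) : dotL u x = dotp u x := rfl

lemma dotp_comm {d : ℕ} (u x : Fin d → ℝ) : dotp u x = dotp x u := by
  simp [dotp, mul_comm]

lemma exists_dotp {d : ℕ} (f : (Fin d → ℝ) →ₗ[ℝ] ℝ) : ∃ u, f = dotL u := by
  classical
  refine ⟨fun i => f (Pi.single i 1), ?_⟩
  refine (Pi.basisFun ℝ (Fin d)).ext fun i => ?_
  simp [dotL_apply, dotp, Pi.single_apply]

lemma dotp_int {d : ℕ} {u x : Fin d → ℝ} (hu : IsLP u) (hx : IsLP x) :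
    ∃ n : ℤ, dotp u x = n := by
  choose a ha using hu
  choose b hb using hx
  exact ⟨∑ i, a i * b i, by simp [dotp, ha, hb]⟩

section geo
variable {d : ℕ} {P : Set (Fin d → ℝ)} {V : Finset (Fin d → ℝ)}

lemma P_eq_hull (hP : IsReflexive P) (hV : (V : Set (Fin d → ℝ)) = Set.extremePoints ℝ P) :
    P = convexHull ℝ (V : Set (Fin d → ℝ)) := by
  obtain ⟨⟨W, hW, rfl⟩, -, -⟩ := hP
  have h1 : IsCompact (convexHull ℝ (W : Set (Fin d → ℝ))) :=
    W.finite_toSet.isCompact_convexHull ℝ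
  have h2 := closure_convexHull_extremePoints h1 (convex_convexHull ℝ _)
  rw [← hV] at h2
  rw [← h2]
  exact (V.finite_toSet.isClosed_convexHull ℝ).closure_eq

lemma V_LP (hP : IsReflexive P) (hV : (V : Set (Fin d → ℝ)) = Set.extremePoints ℝ P) :
    ∀ v ∈ V, IsLP v := by
  obtain ⟨⟨W, hW, rfl⟩, -, -⟩ := hP
  intro v hv
  have : v ∈ (V : Set (Fin d → ℝ)) := hv
  rw [hV] at this
  exact hW v (extremePoints_convexHull_subset this)

lemma le_hull (f : (Fin d → ℝ) →ₗ[ℝ] ℝ) (c : ℝ) (S : Set (Fin d → ℝ)) (h : ∀ v ∈ S, f v ≤ c) :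
    ∀ y ∈ convexHull ℝ S, f y ≤ c := by
  intro y hy
  exact convexHull_min (t := {y | f y ≤ c}) h (convex_halfSpace_le f.isLinear c) hy

lemma mem_dual (hPV : P = convexHull ℝ (V : Set (Fin d → ℝ))) (u : Fin d → ℝ) :
    u ∈ dualPolytope P ↔ ∀ v ∈ V, dotp u v ≤ 1 := by
  constructor
  · intro h v hv
    exact h v (hPV ▸ subset_convexHull ℝ _ hv)
  · intro h y hy
    rw [hPV] at hy
    exact le_hull (dotL u) 1 _ h y hy

lemma fac_of (hd : 3 ≤ d) (hP : IsReflexive P) (hs : IsSimplicial P)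
    (hV : (V : Set (Fin d → ℝ)) = Set.extremePoints ℝ P)
    (B : Module.Basis (Fin d) ℝ (Fin d → ℝ)) (hB : ∀ i, B i ∈ V)
    (f : (Fin d → ℝ) →ₗ[ℝ] ℝ) (hf : ∀ v ∈ V, f v ≤ 1) (hfB : ∀ i, f (B i) = 1) :
    IsFac V B ∧ lev B = f := by
  have hPV := P_eq_hull hP hV
  have hlev := lev_unique B f hfB
  obtain ⟨u, rfl⟩ := exists_dotp f
  have hud : u ∈ dualPolytope P := (mem_dual hPV u).2 hf
  have hVP : ∀ v ∈ V, v ∈ P := fun v hv => by rw [hPV]; exact subset_convexHull ℝ _ hv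
  have hext : u ∈ Set.extremePoints ℝ (dualPolytope P) := by
    rw [mem_extremePoints_iff_left]
    refine ⟨hud, fun x hx y hy hxy => ?_⟩
    obtain ⟨a, b, ha, hb, hab, rfl⟩ := hxy
    have key : ∀ i, dotL x (B i) = 1 := by
      intro i
      have h1 : dotp x (B i) ≤ 1 := hx _ (hVP _ (hB i))
      have h2 : dotp y (B i) ≤ 1 := hy _ (hVP _ (hB i))
      have h3 := hfB i
      have h4 : dotp (a • x + b • y) (B i) = a * dotp x (B i) + b * dotp y (B i) := by
        rw [dotp_comm, ← dotL_apply, map_add, map_smul, map_smul, dotL_apply, dotL_apply,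
          dotp_comm _ x, dotp_comm _ y]; rfl
      rw [dotL_apply, h4] at h3
      rw [dotL_apply]
      nlinarith
    have : dotL x = dotL (a • x + b • y) := B.ext fun i => by rw [key, hfB]
    ext j
    classical
    have := congrArg (fun g => g (Pi.single j 1)) this
    simpa [dotL_apply, dotp, Pi.single_apply] using this
  have huLP : IsLP u := by
    obtain ⟨-, -, W, hW, hWe⟩ := hP
    rw [hWe] at hext
    exact hW u (extremePoints_convexHull_subset hext)
  refine ⟨⟨hB, fun v hv => hlev ▸ hf v hv, ?_, ?_⟩, hlev⟩
  · -- tightness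
    set F : Set (Fin d → ℝ) := {y ∈ P | dotp u y = 1} with hF
    have hBF : ∀ i, B i ∈ F := fun i => ⟨hVP _ (hB i), hfB i⟩
    have hfacet : IsFacet P F := by
      refine ⟨u, ⟨B ⟨0, by omega⟩, hBF _⟩, hud, rfl, ?_⟩
      apply le_antisymm
      · have hle : vectorSpan ℝ F ≤ LinearMap.ker (dotL u) := by
          rw [vectorSpan_def, Submodule.span_le]
          rintro _ ⟨x, hx, y, hy, rfl⟩
          simp only [vsub_eq_sub, SetLike.mem_coe, LinearMap.mem_ker, map_sub, dotL_apply]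
          rw [hx.2, hy.2]; ring
        have hlt : Module.finrank ℝ (LinearMap.ker (dotL u)) < d := by
          have : LinearMap.ker (dotL u) < ⊤ := by
            rw [lt_top_iff_ne_top]
            intro h
            have : B ⟨0, by omega⟩ ∈ LinearMap.ker (dotL u) := by rw [h]; trivial
            rw [LinearMap.mem_ker, hfB] at this
            norm_num at this
          have := Submodule.finrank_lt this.ne
          simpa using this
        have := Submodule.finrank_mono hle
        omega
      · have hai := B.linearIndependent.affineIndependent
        have h1 := hai.finrank_vectorSpan (n := d - 1) (by simp; omega)
        rw [← h1]
        apply Submodule.finrank_mono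
        apply vectorSpan_mono
        rintro _ ⟨i, rfl⟩
        exact hBF i
    have hcard := hs F hfacet
    have hfin : (Set.extremePoints ℝ F).Finite := by
      apply Set.finite_of_ncard_pos; omega
    have hsub : Set.range B ⊆ Set.extremePoints ℝ F := by
      rintro _ ⟨i, rfl⟩
      apply inter_extremePoints_subset_extremePoints_of_subset (A := P) (fun x hx => hx.1)
      exact ⟨hBF i, hV ▸ (hB i)⟩
    have hrc : (Set.range B).ncard = d := by
      rw [Set.ncard_range_of_injective B.injective]; simp
    have heq := Set.eq_of_subset_of_ncard_le hsub (by rw [hrc, hcard]) hfin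
    intro v hv hv1
    rw [hlev] at hv1
    have : v ∈ Set.extremePoints ℝ F := by
      apply inter_extremePoints_subset_extremePoints_of_subset (A := P) (fun x hx => hx.1)
      exact ⟨⟨hVP v hv, hv1⟩, hV ▸ hv⟩
    rw [← heq] at this
    obtain ⟨i, hi⟩ := this
    exact ⟨i, hi.symm⟩
  · intro v hv
    rw [hlev]
    exact dotp_int huLP hv

lemma zero_int (hP : IsReflexive P) (hPV : P = convexHull ℝ (V : Set (Fin d → ℝ)))
    (f : (Fin d → ℝ) →ₗ[ℝ] ℝ) (h : ∀ v ∈ V, 0 ≤ f v) : f = 0 := by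
  have h0 := hP.2.1
  rw [mem_interior_iff_mem_nhds, Metric.mem_nhds_iff] at h0
  obtain ⟨ε, hε, hb⟩ := h0
  have h1 : ∀ y ∈ P, 0 ≤ f y := by
    intro y hy
    rw [hPV] at hy
    have := le_hull (-f) 0 _ (fun v hv => by simpa using h v hv) y hy
    simpa using this
  have h2 : ∀ y, 0 ≤ f y := by
    intro y
    have hn : 0 < ‖y‖ + 1 := by positivity
    have : (ε / 2 / (‖y‖ + 1)) • y ∈ P := by
      apply hb
      rw [mem_ball_zero_iff, norm_smul, Real.norm_of_nonneg (by positivity)]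
      rw [div_mul_eq_mul_div, div_lt_iff₀ hn]
      nlinarith [norm_nonneg y]
    have := h1 _ this
    rw [map_smul, smul_eq_mul] at this
    have hp : 0 < ε / 2 / (‖y‖ + 1) := by positivity
    exact nonneg_of_mul_nonneg_right this hp
  ext y
  have a := h2 (LinearMap.single ℝ _ y 1)
  have b := h2 (-(LinearMap.single ℝ _ y 1))
  rw [map_neg] at b
  simpa using le_antisymm (by linarith) a

lemma fac_of_extreme (hd : 3 ≤ d) (hP : IsReflexive P) (hs : IsSimplicial P)
    (hV : (V : Set (Fin d → ℝ)) = Set.extremePoints ℝ P)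
    (u : Fin d → ℝ) (hu : u ∈ Set.extremePoints ℝ (dualPolytope P)) :
    ∃ B, IsFac V B ∧ lev B = dotL u := by
  have hPV := P_eq_hull hP hV
  have hud := (mem_dual hPV u).1 hu.1
  set T : Set (Fin d → ℝ) := {v | v ∈ V ∧ dotp u v = 1} with hT
  have hspan : ⊤ ≤ Submodule.span ℝ T := by
    by_contra hcon
    have hne : Submodule.span ℝ T < ⊤ := lt_top_iff_ne_top.2 fun h => hcon (h ▸ le_rfl)
    obtain ⟨f, hf0, hf⟩ := Submodule.exists_le_ker_of_lt_top _ hne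
    obtain ⟨h, rfl⟩ := exists_dotp f
    have hh : ∀ v ∈ T, dotp h v = 0 := fun v hv => hf (Submodule.subset_span hv)
    -- choose epsilon
    have : ∃ ε > 0, ∀ v ∈ V, dotp u v + ε * |dotp h v| ≤ 1 := by
      have : ∀ v ∈ V, ∃ ε > 0, ∀ δ, 0 < δ → δ ≤ ε → dotp u v + δ * |dotp h v| ≤ 1 := by
        intro v hv
        by_cases h1 : dotp u v = 1
        · exact ⟨1, one_pos, fun δ _ _ => by simp [hh v ⟨hv, h1⟩, h1]⟩
        · have h2 : dotp u v < 1 := lt_of_le_of_ne (hud v hv) h1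
          refine ⟨(1 - dotp u v) / (|dotp h v| + 1), div_pos (by linarith) (by positivity), ?_⟩
          intro δ hδ hδ2
          rw [le_div_iff₀ (by positivity)] at hδ2
          nlinarith [abs_nonneg (dotp h v)]
      choose! e he1 he2 using this
      by_cases hVne : V.Nonempty
      · obtain ⟨w, hw, hmin⟩ := V.exists_min_image e hVne
        exact ⟨e w, he1 w hw, fun v hv => he2 v hv _ (he1 w hw) (hmin v hv)⟩
      · exact ⟨1, one_pos, fun v hv => absurd ⟨v, hv⟩ hVne⟩
    obtain ⟨ε, hε, hεV⟩ := this
    have e1 : ∀ v, dotp (u + ε • h) v = dotp u v + ε * dotp h v := by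
      intro v; rw [dotp_comm, ← dotL_apply, map_add, map_smul, dotL_apply, dotL_apply,
        dotp_comm v, dotp_comm v]; rfl
    have e2 : ∀ v, dotp (u - ε • h) v = dotp u v - ε * dotp h v := by
      intro v; rw [dotp_comm, ← dotL_apply, map_sub, map_smul, dotL_apply, dotL_apply,
        dotp_comm v, dotp_comm v]; rfl
    have m1 : u + ε • h ∈ dualPolytope P := (mem_dual hPV _).2 fun v hv => by
      rw [e1]; nlinarith [hεV v hv, le_abs_self (dotp h v)]
    have m2 : u - ε • h ∈ dualPolytope P := (mem_dual hPV _).2 fun v hv => by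
      rw [e2]; nlinarith [hεV v hv, neg_abs_le (dotp h v)]
    have := (mem_extremePoints_iff_left.1 hu).2 _ m1 _ m2
      ⟨1/2, 1/2, by norm_num, by norm_num, by norm_num, by module⟩
    apply hf0
    have hz : h = 0 := by
      have : ε • h = 0 := by simpa using this
      exact (smul_eq_zero.1 this).resolve_left hε.ne'
    ext j; simp [hz, dotL, dotp]
  let B0 := Module.Basis.ofSpan hspan
  have : Finite ((linearIndepOn_empty ℝ (id : (Fin d → ℝ) → _)).extend (Set.empty_subset T)) :=
    Module.Finite.finite_basis B0
  have := Fintype.ofFinite ((linearIndepOn_empty ℝ (id : (Fin d → ℝ) → _)).extend (Set.empty_subset T))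
  have hc := Module.finrank_eq_card_basis B0
  rw [Module.finrank_fin_fun] at hc
  let B := B0.reindex (Fintype.equivFinOfCardEq hc.symm)
  have hBT : ∀ i, B i ∈ T := by
    intro i
    simp only [B, Module.Basis.reindex_apply]
    exact Module.Basis.ofSpan_subset hspan ⟨_, rfl⟩
  exact ⟨B, fac_of hd hP hs hV B (fun i => (hBT i).1) (dotL u) hud (fun i => (hBT i).2)⟩

lemma dual_compact (hP : IsReflexive P) : IsCompact (dualPolytope P) ∧ Convex ℝ (dualPolytope P) := by
  obtain ⟨-, -, W, hW, h⟩ := hP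
  rw [h]
  exact ⟨W.finite_toSet.isCompact_convexHull ℝ, convex_convexHull ℝ _⟩

lemma exists_fac (hd : 3 ≤ d) (hP : IsReflexive P) (hs : IsSimplicial P)
    (hV : (V : Set (Fin d → ℝ)) = Set.extremePoints ℝ P) : ∃ B, IsFac V B := by
  obtain ⟨u, hu⟩ := (dual_compact hP).1.extremePoints_nonempty ⟨0, fun y _ => by simp [dotp]⟩
  obtain ⟨B, hB, -⟩ := fac_of_extreme hd hP hs hV u hu
  exact ⟨B, hB⟩

lemma mem_of_lev (hd : 3 ≤ d) (hP : IsReflexive P) (hs : IsSimplicial P)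
    (hV : (V : Set (Fin d → ℝ)) = Set.extremePoints ℝ P) (x : Fin d → ℝ)
    (hx : ∀ B, IsFac V B → lev B x ≤ 1) : x ∈ P := by
  have hPV := P_eq_hull hP hV
  have hcl : IsClosed P := by rw [hPV]; exact V.finite_toSet.isClosed_convexHull ℝ
  have hcv : Convex ℝ P := by rw [hPV]; exact convex_convexHull ℝ _
  by_contra hxP
  obtain ⟨f, s, hf, hfx⟩ := geometric_hahn_banach_closed_point hcv hcl hxP
  have h0 : 0 ∈ P := interior_subset hP.2.1
  have hs0 : 0 < s := by simpa using hf 0 h0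
  obtain ⟨u, hu⟩ := exists_dotp (f : (Fin d → ℝ) →ₗ[ℝ] ℝ)
  have hfu : ∀ y, f y = dotp u y := fun y => congrArg (fun g => g y) hu
  have hmem : s⁻¹ • u ∈ dualPolytope P := by
    intro y hy
    have := hf y hy
    rw [dotp_comm, ← dotL_apply, map_smul, dotL_apply, dotp_comm, ← hfu, smul_eq_mul]
    rw [inv_mul_le_iff₀ hs0]; linarith
  rw [← closure_convexHull_extremePoints (dual_compact hP).1 (dual_compact hP).2] at hmem
  have hcl2 : IsClosed {u | dotL x u ≤ 1} :=
    isClosed_le (LinearMap.continuous_of_finiteDimensional _) continuous_const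
  have hsub : convexHull ℝ (Set.extremePoints ℝ (dualPolytope P)) ⊆ {u | dotL x u ≤ 1} := by
    apply convexHull_min _ (convex_halfSpace_le (dotL x).isLinear 1)
    intro w hw
    obtain ⟨B, hB, hl⟩ := fac_of_extreme hd hP hs hV w hw
    have := hx B hB
    rw [hl, dotL_apply, dotp_comm] at this
    exact this
  have := closure_minimal hsub hcl2 hmem
  simp only [Set.mem_ofPred_eq, map_smul, smul_eq_mul] at this
  rw [dotL_apply, dotp_comm, ← hfu, inv_mul_le_iff₀ hs0] at this
  linarith

lemma exists_update (B : Module.Basis (Fin d) ℝ (Fin d → ℝ)) (i : Fin d) (w : Fin d → ℝ)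
    (hw : B.repr w i ≠ 0) :
    ∃ B' : Module.Basis (Fin d) ℝ (Fin d → ℝ), B' i = w ∧ ∀ j, j ≠ i → B' j = B j := by
  classical
  have hli : LinearIndependent ℝ (Function.update B i w) := by
    rw [Fintype.linearIndependent_iff]
    intro c hc
    have h1 : ∀ m, c i * B.repr w m + (∑ j ∈ Finset.univ.erase i, c j * B.repr (B j) m) = 0 := by
      intro m
      have := congrArg (fun x => B.repr x m) hc
      simp only [map_sum, map_smul, Finsupp.coe_finsetSum, Finset.sum_apply, map_zero,
        Finsupp.coe_smul, Pi.smul_apply, smul_eq_mul, Finsupp.coe_zero, Pi.zero_apply] at this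
      rw [← Finset.add_sum_erase _ _ (Finset.mem_univ i)] at this
      rw [Function.update_self] at this
      rw [← this]
      congr 1
      apply Finset.sum_congr rfl
      intro j hj
      rw [Function.update_of_ne (Finset.ne_of_mem_erase hj)]
    have hci : c i = 0 := by
      have := h1 i
      rw [Finset.sum_eq_zero] at this
      · simpa [hw] using this
      · intro j hj
        have := Finset.ne_of_mem_erase hj
        simp [this]
    intro j
    by_cases hji : j = i
    · rw [hji, hci]
    · have := h1 j
      rw [hci, zero_mul, zero_add, Finset.sum_eq_single j] at this
      · simpa using this
      · intro m _ hm
        simp [hm]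
      · intro h; simp [hji] at h
  refine ⟨basisOfLinearIndependentOfCardEqFinrank' _ hli (by simp), ?_, ?_⟩
  · simp
  · intro j hj; simp [hj]

lemma exists_nb (hd : 3 ≤ d) (hP : IsReflexive P) (hs : IsSimplicial P)
    (hV : (V : Set (Fin d → ℝ)) = Set.extremePoints ℝ P)
    (B : Module.Basis (Fin d) ℝ (Fin d → ℝ)) (hB : IsFac V B) (i : Fin d) :
    ∃ k : ℤ, 1 ≤ k ∧ ∃ w ∈ V, ∃ B', IsFac V B' ∧ B' i = w ∧ (∀ j, j ≠ i → B' j = B j) ∧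
      B.repr w i < 0 ∧ ∀ v, lev B' v = lev B v - k * B.repr v i := by
  classical
  have hPV := P_eq_hull hP hV
  have hne : (V.filter fun v => B.repr v i < 0).Nonempty := by
    by_contra hcon
    rw [Finset.not_nonempty_iff_eq_empty, Finset.filter_eq_empty_iff] at hcon
    have := zero_int hP hPV (B.coord i) (fun v hv => by
      have := hcon hv; simpa using this)
    have h2 := congrArg (fun g => g (B i)) this
    simp at h2
  obtain ⟨w, hw, hmin⟩ := Finset.exists_min_image _
    (fun v => (1 - lev B v) / (-B.repr v i)) hne
  rw [Finset.mem_filter] at hw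
  obtain ⟨hwV, hwi⟩ := hw
  obtain ⟨t, ht⟩ : ∃ t, t = (1 - lev B w) / (-B.repr w i) := ⟨_, rfl⟩
  have htw : t * (-B.repr w i) = 1 - lev B w := by
    rw [ht, div_mul_cancel₀ _ (neg_ne_zero.2 hwi.ne)]
  obtain ⟨B', hB'i, hB'j⟩ := exists_update B i w hwi.ne
  have hB'V : ∀ j, B' j ∈ V := by
    intro j
    by_cases h : j = i
    · rw [h, hB'i]; exact hwV
    · rw [hB'j j h]; exact hB.mem j
  have hlw : lev B w ≠ 1 := by
    intro h
    obtain ⟨j, hj⟩ := hB.tight w hwV h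
    rw [hj] at hwi
    simp only [Module.Basis.repr_self, Finsupp.single_apply] at hwi
    split_ifs at hwi <;> linarith
  have htpos : 0 < t := by
    have h1 : lev B w < 1 := lt_of_le_of_ne (hB.le w hwV) hlw
    rw [ht]; apply div_pos <;> linarith
  obtain ⟨hF', hl'⟩ := fac_of hd hP hs hV B' hB'V (lev B - t • B.coord i) (by
    intro v hv
    simp only [LinearMap.sub_apply, LinearMap.smul_apply, Module.Basis.coord_apply, smul_eq_mul]
    by_cases h : B.repr v i < 0
    · have := hmin v (Finset.mem_filter.2 ⟨hv, h⟩)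
      rw [← ht, le_div_iff₀ (by linarith)] at this
      linarith
    · push Not at h
      nlinarith [hB.le v hv]) (by
    intro j
    simp only [LinearMap.sub_apply, LinearMap.smul_apply, Module.Basis.coord_apply, smul_eq_mul]
    by_cases h : j = i
    · rw [h, hB'i]; linarith
    · rw [hB'j j h, lev_self]; simp [h])
  have hlv : ∀ v, lev B' v = lev B v - t * B.repr v i := by
    intro v; rw [hl']; simp
  obtain ⟨n, hn⟩ := hF'.int (B i) (V_LP hP hV _ (hB.mem i))
  have htn : t = ((1 - n : ℤ) : ℝ) := by
    have := hlv (B i)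
    rw [hn, lev_self] at this
    simp at this
    push_cast; linarith
  refine ⟨1 - n, ?_, w, hwV, B', hF', hB'i, hB'j, hwi, ?_⟩
  · rw [htn] at htpos
    have : (0:ℤ) < 1 - n := by exact_mod_cast htpos
    omega
  · intro v; rw [hlv, htn]

end geo


/-- The combinatorial package extracted from the polytope. -/
structure Good {d : ℕ} (V : Finset (Fin d → ℝ)) : Prop where
  hd : 3 ≤ d
  LP : ∀ v ∈ V, IsLP v
  card : V.card = 3 * d - 1
  sum : ∑ v ∈ V, v = 0
  ex : ∃ B, IsFac V B
  nb : ∀ B, IsFac V B → ∀ i, ∃ k : ℤ, 1 ≤ k ∧ ∃ w ∈ V, ∃ B', IsFac V B' ∧ B' i = w ∧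
    (∀ j, j ≠ i → B' j = B j) ∧ B.repr w i < 0 ∧ ∀ v, lev B' v = lev B v - k * B.repr v i
  nz : ∀ v ∈ V, v ≠ 0
  sym : (∀ B, IsFac V B → ∀ v ∈ V, -1 ≤ lev B v) → ∀ v ∈ V, -v ∈ V

section comb
variable {d : ℕ} {V : Finset (Fin d → ℝ)} {B : Module.Basis (Fin d) ℝ (Fin d → ℝ)}

lemma repr_update {B B' : Module.Basis (Fin d) ℝ (Fin d → ℝ)} {i : Fin d} {w : Fin d → ℝ}
    (hi : B' i = w) (hj : ∀ j, j ≠ i → B' j = B j) (v : Fin d → ℝ) :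
    B.repr v i = B'.repr v i * B.repr w i ∧
    ∀ j, j ≠ i → B.repr v j = B'.repr v j + B'.repr v i * B.repr w j := by
  classical
  have h1 : ∀ m, B.repr v m = B'.repr v i * B.repr w m +
      ∑ j ∈ Finset.univ.erase i, B'.repr v j * B.repr (B j) m := by
    intro m
    have h := congrArg (fun x => B.repr x m) (B'.sum_repr v)
    simp only [map_sum, map_smul, Finsupp.coe_finsetSum, Finset.sum_apply,
        Finsupp.coe_smul, Pi.smul_apply, smul_eq_mul] at h
    rw [← h, ← Finset.add_sum_erase _ _ (Finset.mem_univ i), hi]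
    congr 1
    apply Finset.sum_congr rfl
    intro j hj'
    rw [hj j (Finset.ne_of_mem_erase hj')]
  constructor
  · rw [h1 i, Finset.sum_eq_zero, add_zero]
    intro j hj'
    have := Finset.ne_of_mem_erase hj'
    simp [this]
  · intro j hji
    rw [h1 j, Finset.sum_eq_single j]
    · simp; ring
    · intro m _ hm
      simp [hm]
    · intro h; simp [hji] at h

lemma lev_sum_repr_erase (i : Fin d) (v : Fin d → ℝ) :
    lev B v = B.repr v i + ∑ j ∈ Finset.univ.erase i, B.repr v j := by
  rw [lev_apply, ← Finset.add_sum_erase _ _ (Finset.mem_univ i)]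

lemma IsFac.lt_one (hB : IsFac V B) {v : Fin d → ℝ} (hv : v ∈ V) (h : ∀ i, v ≠ B i) :
    lev B v < 1 := by
  refine lt_of_le_of_ne (hB.le v hv) fun h1 => ?_
  obtain ⟨i, hi⟩ := hB.tight v hv h1
  exact h i hi

lemma Good.flip (hG : Good V) (hB : IsFac V B) {w : Fin d → ℝ} (hw : w ∈ V)
    (hl : lev B w = 0) {i : Fin d} (hi : B.repr w i < 0) :
    ∃ k : ℤ, 1 ≤ k ∧ (k : ℝ) * B.repr w i = -1 ∧ ∃ B', IsFac V B' ∧ B' i = w ∧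
      (∀ j, j ≠ i → B' j = B j) ∧ (∀ v, lev B' v = lev B v - k * B.repr v i) ∧
      (∀ v, B'.repr v i = - (k * B.repr v i)) ∧
      (∀ v j, j ≠ i → B'.repr v j = B.repr v j + k * B.repr v i * B.repr w j) := by
  obtain ⟨k, hk, w0, hw0, B', hB', h1, h2, h3, h4⟩ := hG.nb B hB i
  have hk' : (1 : ℝ) ≤ k := by exact_mod_cast hk
  obtain ⟨n, hn⟩ := hB'.int w (hG.LP w hw)
  have hle := hB'.le w hw
  have hlw := h4 w
  rw [hl] at hlw
  have hpos : 0 < lev B' w := by rw [hlw]; nlinarith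
  have hone : lev B' w = 1 := by
    rw [hn] at hle hpos ⊢
    have a : n ≤ 1 := by exact_mod_cast hle
    have b : 0 < n := by exact_mod_cast hpos
    have : n = 1 := by omega
    rw [this]; simp
  have hw0w : w = w0 := by
    obtain ⟨j, hj⟩ := hB'.tight w hw hone
    by_cases hji : j = i
    · rw [hj, hji, h1]
    · rw [h2 j hji] at hj
      rw [hj, lev_self] at hl
      norm_num at hl
  subst hw0w
  have hkw : (k : ℝ) * B.repr w i = -1 := by rw [hone] at hlw; linarith
  have hr := fun v => repr_update (B := B) h1 h2 v
  have hri : ∀ v, B'.repr v i = - (k * B.repr v i) := by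
    intro v
    have := (hr v).1
    calc B'.repr v i = - (k * (B'.repr v i * B.repr w i)) := by
          rw [show (k : ℝ) * (B'.repr v i * B.repr w i) = B'.repr v i * (k * B.repr w i) by ring,
            hkw]; ring
      _ = _ := by rw [← this]
  refine ⟨k, hk, hkw, B', hB', h1, h2, h4, hri, ?_⟩
  intro v j hj
  have := (hr v).2 j hj
  rw [hri] at this
  linarith

lemma Good.uniq (hG : Good V) (hB : IsFac V B) {w w' : Fin d → ℝ} (hw : w ∈ V) (hw' : w' ∈ V)
    (hl : lev B w = 0) (hl' : lev B w' = 0) {i : Fin d} (hi : B.repr w i < 0)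
    (hi' : B.repr w' i < 0) : w = w' := by
  obtain ⟨k, hk, hkw, B', hB', h1, h2, h4, -, -⟩ := hG.flip hB hw hl hi
  have hk' : (1 : ℝ) ≤ k := by exact_mod_cast hk
  have hle := hB'.le w' hw'
  obtain ⟨n, hn⟩ := hB'.int w' (hG.LP w' hw')
  have hlw := h4 w'
  rw [hl'] at hlw
  have hpos : 0 < lev B' w' := by rw [hlw]; nlinarith
  have hone : lev B' w' = 1 := by
    rw [hn] at hle hpos ⊢
    have a : n ≤ 1 := by exact_mod_cast hle
    have b : 0 < n := by exact_mod_cast hpos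
    have : n = 1 := by omega
    rw [this]; simp
  obtain ⟨j, hj⟩ := hB'.tight w' hw' hone
  by_cases hji : j = i
  · rw [hj, hji, h1]
  · rw [h2 j hji] at hj
    rw [hj, lev_self] at hl'
    norm_num at hl'

lemma Good.ge_neg_one (hG : Good V) (hB : IsFac V B) {w : Fin d → ℝ} (hw : w ∈ V)
    (hl : lev B w = 0) (i : Fin d) : -1 ≤ B.repr w i := by
  by_contra h
  push Not at h
  obtain ⟨k, hk, hkw, -⟩ := hG.flip hB hw hl (i := i) (by linarith)
  have hk' : (1 : ℝ) ≤ k := by exact_mod_cast hk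
  nlinarith

lemma exists_neg_of_lev_zero {w : Fin d → ℝ} (hw0 : w ≠ 0) (hl : lev B w = 0) :
    ∃ i, B.repr w i < 0 := by
  by_contra h
  push Not at h
  rw [lev_apply] at hl
  rw [Finset.sum_eq_zero_iff_of_nonneg (fun i _ => h i)] at hl
  apply hw0
  apply B.repr.injective
  ext i
  simpa using hl i (Finset.mem_univ i)

lemma Good.card_le (hG : Good V) (hB : IsFac V B) :
    (V.filter (fun v => lev B v = 0)).card ≤ d := by
  classical
  have h : ∀ v : {v // v ∈ V.filter (fun v => lev B v = 0)}, ∃ i, B.repr v.1 i < 0 := by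
    rintro ⟨v, hv⟩
    rw [Finset.mem_filter] at hv
    exact exists_neg_of_lev_zero (hG.nz v hv.1) hv.2
  choose f hf using h
  have hinj : Function.Injective f := by
    rintro ⟨v, hv⟩ ⟨w, hw⟩ hvw
    have h1 := hf ⟨v, hv⟩
    have h2 := hf ⟨w, hw⟩
    rw [hvw] at h1
    rw [Finset.mem_filter] at hv hw
    exact Subtype.ext (hG.uniq hB hv.1 hw.1 hv.2 hw.2 h1 h2)
  have := Fintype.card_le_of_injective f hinj
  simpa using this

/-- The basic counting lemma. -/
lemma Good.cnt (hG : Good V) (hB : IsFac V B) :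
    (∀ v ∈ V, -2 ≤ lev B v) ∧
    (∀ z ∈ V, ∀ z' ∈ V, lev B z = -2 → lev B z' = -2 → z = z') ∧
    ((∃ z ∈ V, lev B z = -2) → (V.filter (fun v => lev B v = 0)).card = d) ∧
    ((∀ z ∈ V, -1 ≤ lev B z) → (V.filter (fun v => lev B v = 0)).card = d - 1) := by
  classical
  have hd := hG.hd
  have hl : ∀ v : Fin d → ℝ, ∃ n : ℤ, v ∈ V → lev B v = n := by
    intro v
    by_cases hv : v ∈ V
    · obtain ⟨n, hn⟩ := hB.int v (hG.LP v hv)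
      exact ⟨n, fun _ => hn⟩
    · exact ⟨0, fun h => absurd h hv⟩
  choose l hl using hl
  have hsum : ∑ v ∈ V, l v = 0 := by
    have h1 : ∑ v ∈ V, lev B v = 0 := by rw [← map_sum, hG.sum, map_zero]
    rw [Finset.sum_congr rfl hl] at h1
    exact_mod_cast h1
  have hle : ∀ v ∈ V, l v ≤ 1 := by
    intro v hv
    have := hB.le v hv
    rw [hl v hv] at this
    exact_mod_cast this
  have h1 : (V.filter (fun v => l v = 1)).card = d := by
    have : V.filter (fun v => l v = 1) = Finset.univ.image B := by
      ext v
      simp only [Finset.mem_filter, Finset.mem_image, Finset.mem_univ, true_and]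
      constructor
      · rintro ⟨hv, h⟩
        obtain ⟨i, hi⟩ := hB.tight v hv (by rw [hl v hv, h]; simp)
        exact ⟨i, hi.symm⟩
      · rintro ⟨i, rfl⟩
        refine ⟨hB.mem i, ?_⟩
        have := lev_self B i
        rw [hl _ (hB.mem i)] at this
        exact_mod_cast this
    rw [this, Finset.card_image_of_injective _ B.injective]
    simp
  have h0e : V.filter (fun v => lev B v = 0) = V.filter (fun v => l v = 0) := by
    apply Finset.filter_congr
    intro v hv
    rw [hl v hv]
    simp
  have h0 := hG.card_le hB
  rw [h0e] at h0 ⊢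
  let h : (Fin d → ℝ) → ℤ := fun v => max 0 (-(l v + 1))
  have hh : ∑ v ∈ V, h v = (V.filter (fun v => l v = 0)).card - d + 1 := by
    have e : ∀ v ∈ V, h v = 2 * (if l v = 1 then 1 else 0) + (if l v = 0 then 1 else 0) - l v - 1 := by
      intro v hv
      have := hle v hv
      simp only [h]
      split_ifs <;> omega
    rw [Finset.sum_congr rfl e]
    rw [Finset.sum_sub_distrib, Finset.sum_sub_distrib, Finset.sum_add_distrib, ← Finset.mul_sum,
      hsum, Finset.sum_boole, Finset.sum_boole, h1]
    simp only [Finset.sum_const, hG.card]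
    have : ((3 * d - 1 : ℕ) : ℤ) = 3 * d - 1 := by omega
    simp [this]
    ring
  have hn : ∀ v ∈ V, 0 ≤ h v := fun v _ => le_max_left _ _
  have key : ∀ v ∈ V, h v ≤ 1 := by
    intro v hv
    have := Finset.single_le_sum hn hv
    omega
  have hm2 : ∀ z ∈ V, lev B z = -2 → l z = -2 := by
    intro z hz h
    rw [hl z hz] at h
    exact_mod_cast h
  refine ⟨?_, ?_, ?_, ?_⟩
  · intro v hv
    have := key v hv
    have h2 : -2 ≤ l v := by simp only [h] at this; omega
    rw [hl v hv]
    exact_mod_cast h2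
  · intro z hz z' hz' a a'
    by_contra hne
    have a := hm2 z hz a
    have a' := hm2 z' hz' a'
    have : ∑ v ∈ {z, z'}, h v ≤ ∑ v ∈ V, h v := by
      apply Finset.sum_le_sum_of_subset_of_nonneg
      · intro v; simp; rintro (rfl | rfl) <;> assumption
      · intro v hv _; exact hn v hv
    rw [Finset.sum_pair hne] at this
    simp only [h] at this hh
    rw [a, a'] at this
    omega
  · rintro ⟨z, hz, a⟩
    have a := hm2 z hz a
    have := Finset.single_le_sum hn hz
    have : h z = 1 := by simp only [h]; rw [a]; rfl
    omega
  · intro hz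
    have : ∑ v ∈ V, h v = 0 := by
      apply Finset.sum_eq_zero
      intro v hv
      have := hz v hv
      rw [hl v hv] at this
      have : -1 ≤ l v := by exact_mod_cast this
      simp only [h]
      omega
    omega

end comb

section goodof
variable {d : ℕ} {P : Set (Fin d → ℝ)} {V : Finset (Fin d → ℝ)}

lemma good_of (hd : 3 ≤ d) (hP : IsReflexive P) (hs : IsSimplicial P)
    (hcard : (Set.extremePoints ℝ P).ncard = 3 * d - 1)
    (hV : (V : Set (Fin d → ℝ)) = Set.extremePoints ℝ P)
    (hnu : ∑ v ∈ V, v = 0) : Good V := by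
  have hPV := P_eq_hull hP hV
  have hVP : ∀ v ∈ V, v ∈ Set.extremePoints ℝ P := fun v hv => by
    rw [← hV]; exact hv
  refine ⟨hd, V_LP hP hV, ?_, hnu, exists_fac hd hP hs hV, fun B hB i => exists_nb hd hP hs hV B hB i, ?_, ?_⟩
  · rw [← hcard, ← hV, Set.ncard_coe_finset]
  · rintro v hv rfl
    have h0 := hVP _ hv
    obtain ⟨ε, hε, hb⟩ := Metric.mem_nhds_iff.1 (mem_interior_iff_mem_nhds.1 hP.2.1)
    let y : Fin d → ℝ := fun _ => ε / 2
    have hy : ‖y‖ < ε := by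
      have : ‖y‖ ≤ ε / 2 := by
        rw [pi_norm_le_iff_of_nonneg (by positivity)]
        intro i
        simp only [y]
        rw [Real.norm_of_nonneg (by positivity)]
      linarith
    have h1 : y ∈ P := hb (by simpa using hy)
    have h2 : -y ∈ P := hb (by simpa using hy)
    have := h0.2 h1 h2 ⟨1/2, 1/2, by norm_num, by norm_num, by norm_num, by ext i; simp⟩
    have h3 := congrFun this ⟨0, by omega⟩
    simp [y] at h3
    linarith
  · intro hlev v hv
    have hneg : ∀ v ∈ V, -v ∈ P := by
      intro v hv
      apply mem_of_lev hd hP hs hV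
      intro B hB
      rw [map_neg]
      linarith [hlev B hB v hv]
    have hPn : ∀ x ∈ P, -x ∈ P := by
      have hconv : Convex ℝ P := by rw [hPV]; exact convex_convexHull _ _
      have : P ⊆ (fun x => -x) ⁻¹' P := by
        conv_lhs => rw [hPV]
        apply convexHull_min
        · intro v hv; exact hneg v hv
        · have := hconv.linear_preimage (-LinearMap.id : (Fin d → ℝ) →ₗ[ℝ] (Fin d → ℝ))
          exact this
      exact this
    have hm : -v ∈ Set.extremePoints ℝ P := by
      obtain ⟨_, h2⟩ := hVP v hv
      refine ⟨hneg v hv, ?_⟩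
      intro x hx y hy hxy
      have := h2 (hPn x hx) (hPn y hy) ?_
      · rw [← this, neg_neg]
      · obtain ⟨a, b, ha, hb, hab, h⟩ := hxy
        refine ⟨a, b, ha, hb, hab, ?_⟩
        rw [← neg_neg v, ← h]
        simp; abel
    rw [← hV] at hm
    exact hm

end goodof


/-- Combinatorial description in the odd case. -/
def ResOdd {d : ℕ} (V : Finset (Fin d → ℝ)) : Prop :=
  ∃ (B : Module.Basis (Fin d) ℝ (Fin d → ℝ)) (σ : Fin d → Fin d) (o : Fin d),
    (∀ i, IsLP (B i)) ∧ (∀ v, IsLP v → ∀ i, ∃ n : ℤ, B.repr v i = n) ∧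
    (∀ i, σ (σ i) = i) ∧ (∀ i, σ i = i ↔ i = o) ∧
    ∀ v, v ∈ V ↔ (∃ i, v = B i) ∨ (∃ i, v = -B i) ∨ ∃ i, i ≠ o ∧ v = B (σ i) - B i

section case2
variable {d : ℕ} {V : Finset (Fin d → ℝ)} {B : Module.Basis (Fin d) ℝ (Fin d → ℝ)}

lemma basis_eq_sub {x : Fin d → ℝ} {i j : Fin d} (hij : i ≠ j) (hi : B.repr x i = -1)
    (hj : B.repr x j = 1) (h : ∀ l, l ≠ i → l ≠ j → B.repr x l = 0) : x = B j - B i := by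
  apply B.repr.injective
  ext l
  by_cases hli : l = i
  · subst hli; simp [hi, hij.symm]
  · by_cases hlj : l = j
    · subst hlj; simp [hj, hli]
    · simp [h l hli hlj, Ne.symm hli, Ne.symm hlj]

lemma int_sum {ι : Type*} (s : Finset ι) (f : ι → ℝ) (h : ∀ i ∈ s, ∃ n : ℤ, f i = n) :
    ∃ n : ℤ, ∑ i ∈ s, f i = n := by
  have : ∑ i ∈ s, f i ∈ (Int.castAddHom ℝ).range := by
    apply sum_mem
    intro i hi
    obtain ⟨n, hn⟩ := h i hi
    exact ⟨n, hn.symm⟩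
  obtain ⟨n, hn⟩ := this
  exact ⟨n, hn.symm⟩

lemma case2_k (hG : Good V) (hB : IsFac V B) (hs : ∀ v ∈ V, -v ∈ V)
    {x : Fin d → ℝ} (hx : x ∈ V) (hl : lev B x = 0) {i : Fin d} (hi : B.repr x i < 0) :
    B.repr x i = -1 ∧ ∀ v, IsLP v → ∃ n : ℤ, B.repr v i = n := by
  obtain ⟨k, hk, hkw, B', hB', h1, h2, h4, -, -⟩ := hG.flip hB hx hl hi
  have hlv := h4 (-B i)
  simp [lev_self] at hlv
  have hm := hs _ (hB.mem i)
  have hle := hB'.le _ hm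
  rw [map_neg, hlv] at hle
  have hk2 : k ≤ 2 := by
    have : (k : ℝ) ≤ 2 := by linarith
    exact_mod_cast this
  have hk1 : k ≠ 2 := by
    rintro rfl
    obtain ⟨j, hj⟩ := hB'.tight _ hm (by rw [map_neg, hlv]; norm_num)
    by_cases hji : j = i
    · rw [hji, h1] at hj
      rw [← hj, map_neg, lev_self] at hl
      norm_num at hl
    · rw [h2 j hji] at hj
      have := congrArg (lev B) hj
      rw [map_neg, lev_self, lev_self] at this
      norm_num at this
  have : k = 1 := by omega
  subst this
  refine ⟨by simpa using hkw, fun v hv => ?_⟩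
  obtain ⟨n, hn⟩ := hB.int v hv
  obtain ⟨m, hm⟩ := hB'.int v hv
  refine ⟨n - m, ?_⟩
  have := h4 v
  push_cast at this ⊢
  rw [← hn, ← hm]; linarith

lemma case2 (hG : Good V) (hB : IsFac V B)
    (hno : ∀ B, IsFac V B → ∀ v ∈ V, -1 ≤ lev B v) : ResOdd V := by
  classical
  have hd := hG.hd
  have hs := hG.sym hno
  have hc := (hG.cnt hB).2.2.2 (hno B hB)
  set V0 := V.filter (fun v => lev B v = 0) with hV0
  have h0 : ∀ v ∈ V0, v ∈ V ∧ lev B v = 0 := fun v hv => by simpa [hV0] using hv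
  have h0n : ∀ v ∈ V0, -v ∈ V0 := fun v hv => by
    have := h0 v hv
    simp [hV0, hs v this.1, this.2]
  have hf : ∀ v : Fin d → ℝ, ∃ i : Fin d, v ∈ V0 → B.repr v i < 0 := by
    intro v
    by_cases hv : v ∈ V0
    · obtain ⟨i, hi⟩ := exists_neg_of_lev_zero (B := B) (hG.nz v (h0 v hv).1) (h0 v hv).2
      exact ⟨i, fun _ => hi⟩
    · exact ⟨⟨0, by omega⟩, fun h => absurd h hv⟩
  choose f hf using hf
  have huniq : ∀ v ∈ V0, ∀ w ∈ V0, ∀ i, B.repr v i < 0 → B.repr w i < 0 → v = w :=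
    fun v hv w hw i hi hi' => hG.uniq hB (h0 v hv).1 (h0 w hw).1 (h0 v hv).2 (h0 w hw).2 hi hi'
  have hfi : Set.InjOn f V0 := by
    intro v hv w hw hvw
    have h1 := hf v hv
    rw [hvw] at h1
    exact huniq v hv w hw _ h1 (hf w hw)
  have hcI : (V0.image f).card = d - 1 := by rw [Finset.card_image_of_injOn hfi, hc]
  have hcC : (V0.image f)ᶜ.card = 1 := by
    rw [Finset.card_compl, hcI, Fintype.card_fin]; omega
  obtain ⟨o, ho⟩ := Finset.card_eq_one.1 hcC
  have hmiss : ∀ x ∈ V0, ∀ i, B.repr x i < 0 → f x ≠ i → i = o := by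
    intro x hx i hi hne
    have : i ∈ (V0.image f)ᶜ := by
      rw [Finset.mem_compl, Finset.mem_image]
      rintro ⟨y, hy, rfl⟩
      exact hne (by rw [huniq y hy x hx _ (hf y hy) hi])
    rw [ho] at this
    simpa using this
  have hm1 : ∀ x ∈ V0, ∀ i, B.repr x i < 0 → B.repr x i = -1 := fun x hx i hi =>
    (case2_k hG hB hs (h0 x hx).1 (h0 x hx).2 hi).1
  have hp1 : ∀ x ∈ V0, ∀ i, 0 < B.repr x i → B.repr x i = 1 := fun x hx i hi => by
    have := hm1 (-x) (h0n x hx) i (by simpa using hi)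
    simp at this; linarith
  have hone : ∀ x ∈ V0, ∀ i, B.repr x i < 0 → i = f x := by
    intro x hx i hi
    by_contra hne
    have hio := hmiss x hx i hi (Ne.symm hne)
    have hj0 := hf (-x) (h0n x hx)
    simp at hj0
    have hex : ∃ j', j' ≠ f (-x) ∧ 0 < B.repr x j' := by
      by_contra hcon
      push Not at hcon
      have hsum := lev_sum_repr_erase (B := B) (f (-x)) x
      rw [(h0 x hx).2, hp1 x hx _ hj0] at hsum
      have : ∑ j ∈ Finset.univ.erase (f (-x)), B.repr x j ≤ ∑ j ∈ {i, f x}, B.repr x j := by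
        apply Finset.sum_le_sum_of_subset_of_nonpos'
        · intro l hl
          rw [Finset.mem_erase]
          refine ⟨?_, Finset.mem_univ _⟩
          rintro rfl
          have h2 := hf x hx
          simp only [Finset.mem_insert, Finset.mem_singleton] at hl
          rcases hl with h | h <;> rw [h] at hj0 <;> linarith
        · intro l hl _
          exact hcon l (Finset.ne_of_mem_erase hl)
      rw [Finset.sum_pair hne, hm1 x hx i hi, hm1 x hx _ (hf x hx)] at this
      linarith
    obtain ⟨j', hj', hpos⟩ := hex
    have := hmiss (-x) (h0n x hx) j' (by simpa using hpos) (Ne.symm hj')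
    rw [this, ← hio] at hpos
    linarith
  have hform : ∀ x ∈ V0, f (-x) ≠ f x ∧ x = B (f (-x)) - B (f x) := by
    intro x hx
    have hn := hf x hx
    have hp := hf (-x) (h0n x hx)
    simp at hp
    have hne : f (-x) ≠ f x := by
      intro h; rw [h] at hp; linarith
    refine ⟨hne, basis_eq_sub hne.symm (hm1 x hx _ hn) (hp1 x hx _ hp) ?_⟩
    intro l hl1 hl2
    rcases lt_trichotomy (B.repr x l) 0 with h | h | h
    · exact absurd (hone x hx l h) hl1
    · exact h
    · exact absurd (hone (-x) (h0n x hx) l (by simpa using h)) hl2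
  have hxi : ∀ i, ∃ x, i ≠ o → x ∈ V0 ∧ f x = i := by
    intro i
    by_cases hi : i = o
    · exact ⟨0, fun h => absurd hi h⟩
    · have : i ∈ V0.image f := by
        by_contra h
        have : i ∈ (V0.image f)ᶜ := Finset.mem_compl.2 h
        rw [ho] at this
        exact hi (by simpa using this)
      obtain ⟨x, hx, h⟩ := Finset.mem_image.1 this
      exact ⟨x, fun _ => ⟨hx, h⟩⟩
  choose x hx using hxi
  have hfo : ∀ y ∈ V0, f y ≠ o := by
    intro y hy h
    have : f y ∈ (V0.image f)ᶜ := by rw [ho, h]; simp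
    exact Finset.mem_compl.1 this (Finset.mem_image_of_mem f hy)
  have hcz : ∀ i, i ≠ o → ∀ v, IsLP v → ∃ n : ℤ, B.repr v i = n := by
    intro i hi
    obtain ⟨h1, h2⟩ := hx i hi
    have := hf _ h1
    rw [h2] at this
    exact (case2_k hG hB hs (h0 _ h1).1 (h0 _ h1).2 this).2
  refine ⟨B, fun i => if i = o then o else f (-x i), o, fun i => hG.LP _ (hB.mem i), ?_, ?_, ?_, ?_⟩
  · intro v hv i
    by_cases hi : i = o
    · subst hi
      have := lev_sum_repr_erase (B := B) i v
      obtain ⟨n, hn⟩ := hB.int v hv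
      obtain ⟨m, hm⟩ := int_sum (Finset.univ.erase i) (fun j => B.repr v j)
        (fun j hj => hcz j (Finset.ne_of_mem_erase hj) v hv)
      refine ⟨n - m, ?_⟩
      push_cast
      rw [← hn, ← hm]; linarith
    · exact hcz i hi v hv
  · intro i
    by_cases hi : i = o
    · simp [hi]
    · obtain ⟨h1, h2⟩ := hx i hi
      have ho' := hfo _ (h0n _ h1)
      obtain ⟨h3, h4⟩ := hx _ ho'
      have : x (f (-x i)) = - x i := hfi h3 (h0n _ h1) h4
      simp only [hi, if_false, ho']
      rw [this, neg_neg, h2]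
  · intro i
    by_cases hi : i = o
    · simp [hi]
    · obtain ⟨h1, h2⟩ := hx i hi
      have := (hform _ h1).1
      rw [h2] at this
      simp [hi, this]
  · intro v
    constructor
    · intro hv
      obtain ⟨n, hn⟩ := hB.int v (hG.LP v hv)
      have a := hB.le v hv
      have b := hno B hB v hv
      rw [hn] at a b
      have a' : n ≤ 1 := by exact_mod_cast a
      have b' : -1 ≤ n := by exact_mod_cast b
      obtain rfl | rfl | rfl : n = 1 ∨ n = -1 ∨ n = 0 := by omega
      · left; exact hB.tight v hv (by simpa using hn)
      · right; left
        obtain ⟨i, hi⟩ := hB.tight (-v) (hs v hv) (by simp [hn])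
        exact ⟨i, by rw [← hi, neg_neg]⟩
      · right; right
        have hv0 : v ∈ V0 := by simp [hV0, hv, hn]
        have ho' := hfo v hv0
        refine ⟨f v, ho', ?_⟩
        obtain ⟨h3, h4⟩ := hx _ ho'
        have : x (f v) = v := hfi h3 hv0 h4
        simp only [if_neg ho', this]
        exact (hform v hv0).2
    · rintro (⟨i, rfl⟩ | ⟨i, rfl⟩ | ⟨i, hi, rfl⟩)
      · exact hB.mem i
      · exact hs _ (hB.mem i)
      · obtain ⟨h1, h2⟩ := hx i hi
        simp only [if_neg hi]
        have := (hform _ h1).2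
        rw [h2] at this
        rw [← this]
        exact (h0 _ h1).1

end case2


section case1
variable {d : ℕ} {V : Finset (Fin d → ℝ)} {B : Module.Basis (Fin d) ℝ (Fin d → ℝ)}

/-- Data attached to a facet having a vertex `z` at level `-2`. -/
structure TAD (V : Finset (Fin d → ℝ)) (B : Module.Basis (Fin d) ℝ (Fin d → ℝ))
    (z : Fin d → ℝ) (x : Fin d → Fin d → ℝ) (k : Fin d → ℤ)
    (F : Fin d → Module.Basis (Fin d) ℝ (Fin d → ℝ)) : Prop where
  fac : IsFac V B
  zV : z ∈ V
  zl : lev B z = -2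
  xV : ∀ i, x i ∈ V
  xl : ∀ i, lev B (x i) = 0
  k1 : ∀ i, 1 ≤ k i
  kx : ∀ i, (k i : ℝ) * B.repr (x i) i = -1
  xinj : Function.Injective x
  xsurj : ∀ v ∈ V, lev B v = 0 → ∃ i, v = x i
  xnn : ∀ i j, j ≠ i → 0 ≤ B.repr (x i) j
  Ffac : ∀ i, IsFac V (F i)
  Fi : ∀ i, F i i = x i
  Fj : ∀ i j, j ≠ i → F i j = B j
  Flev : ∀ i v, lev (F i) v = lev B v - k i * B.repr v i
  Frepri : ∀ i v, (F i).repr v i = - (k i * B.repr v i)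
  Freprj : ∀ i v j, j ≠ i → (F i).repr v j = B.repr v j + k i * B.repr v i * B.repr (x i) j

lemma exists_TAD (hG : Good V) (hB : IsFac V B) {z : Fin d → ℝ} (hz : z ∈ V)
    (hzl : lev B z = -2) : ∃ x k F, TAD V B z x k F := by
  classical
  have hc := (hG.cnt hB).2.2.1 ⟨z, hz, hzl⟩
  set V0 := V.filter (fun v => lev B v = 0) with hV0
  have h0 : ∀ v ∈ V0, v ∈ V ∧ lev B v = 0 := fun v hv => by simpa [hV0] using hv
  have hf : ∀ v : V0, ∃ i : Fin d, B.repr v.1 i < 0 := by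
    rintro ⟨v, hv⟩
    exact exists_neg_of_lev_zero (B := B) (hG.nz v (h0 v hv).1) (h0 v hv).2
  choose f hf using hf
  have huniq : ∀ v ∈ V0, ∀ w ∈ V0, ∀ i, B.repr v i < 0 → B.repr w i < 0 → v = w :=
    fun v hv w hw i hi hi' => hG.uniq hB (h0 v hv).1 (h0 w hw).1 (h0 v hv).2 (h0 w hw).2 hi hi'
  have hfi : Function.Injective f := by
    intro v w hvw
    have h1 := hf v
    rw [hvw] at h1
    exact Subtype.ext (huniq v v.2 w w.2 _ h1 (hf w))
  have hbij : Function.Bijective f := by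
    rw [Fintype.bijective_iff_injective_and_card]
    exact ⟨hfi, by simp [hc]⟩
  obtain ⟨g, hgf, hfg⟩ := Function.bijective_iff_has_inverse.1 hbij
  have hneg : ∀ i, B.repr (g i).1 i < 0 := fun i => by
    have := hf (g i)
    rwa [hfg i] at this
  choose k hk1 hkx F hF hFi hFj hFl hFr hFs using
    fun i => hG.flip hB (h0 _ (g i).2).1 (h0 _ (g i).2).2 (hneg i)
  have hinj : Function.Injective (fun i => (g i).1) := by
    intro i j hij
    have := congrArg f (Subtype.ext hij)
    rwa [hfg, hfg] at this
  refine ⟨fun i => (g i).1, k, F, hB, hz, hzl, fun i => (h0 _ (g i).2).1, fun i => (h0 _ (g i).2).2,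
    hk1, hkx, hinj, ?_, ?_, hF, hFi, hFj, hFl, hFr, hFs⟩
  · intro v hv hl
    refine ⟨f ⟨v, by simp [hV0, hv, hl]⟩, ?_⟩
    exact (congrArg Subtype.val (hgf ⟨v, _⟩)).symm
  · intro i j hji
    by_contra h
    push Not at h
    exact hji (hinj (huniq _ (g j).2 _ (g i).2 j (hneg j) h))

lemma Good.A1 (hG : Good V) (hB : IsFac V B) {z : Fin d → ℝ} (hz : z ∈ V)
    (hzl : lev B z = -2) (i : Fin d) : B.repr z i ≤ 0 := by
  by_contra h
  push Not at h
  obtain ⟨k, hk, w, hw, B', hB', h1, h2, h3, h4⟩ := hG.nb B hB i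
  have hk' : (1 : ℝ) ≤ k := by exact_mod_cast hk
  have := (hG.cnt hB').1 z hz
  rw [h4, hzl] at this
  nlinarith

variable {z : Fin d → ℝ} {x : Fin d → Fin d → ℝ} {k : Fin d → ℤ}
  {F : Fin d → Module.Basis (Fin d) ℝ (Fin d → ℝ)}

lemma TAD.k1' (h : TAD V B z x k F) (i : Fin d) : (1 : ℝ) ≤ k i := by exact_mod_cast h.k1 i

lemma TAD.int (h : TAD V B z x k F) (i : Fin d) {v : Fin d → ℝ} (hv : IsLP v) :
    ∃ n : ℤ, (k i : ℝ) * B.repr v i = n := by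
  obtain ⟨n, hn⟩ := h.fac.int v hv
  obtain ⟨m, hm⟩ := (h.Ffac i).int v hv
  have := h.Flev i v
  exact ⟨n - m, by push_cast; rw [← hn, ← hm]; linarith⟩

lemma TAD.xneg (h : TAD V B z x k F) (i : Fin d) : B.repr (x i) i < 0 := by
  have h1 := h.kx i
  have h2 := h.k1' i
  by_contra hc
  push Not at hc
  nlinarith

/-- the only vertices on level one of the flipped facet -/
lemma TAD.Ftight (h : TAD V B z x k F) (i : Fin d) {v : Fin d → ℝ} (hv : v ∈ V)
    (h1 : lev (F i) v = 1) : v = x i ∨ ∃ j, j ≠ i ∧ v = B j := by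
  obtain ⟨j, hj⟩ := (h.Ffac i).tight v hv h1
  by_cases hji : j = i
  · left; rw [hj, hji, h.Fi]
  · right; exact ⟨j, hji, by rw [hj, h.Fj i j hji]⟩

lemma TAD.Flt (h : TAD V B z x k F) (i : Fin d) {v : Fin d → ℝ} (hv : v ∈ V)
    (hl : lev B v ≤ -1) : lev (F i) v < 1 := by
  refine lt_of_le_of_ne ((h.Ffac i).le v hv) fun h1 => ?_
  rcases h.Ftight i hv h1 with rfl | ⟨j, -, rfl⟩
  · rw [h.xl] at hl; norm_num at hl
  · rw [lev_self] at hl; norm_num at hl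

lemma TAD.pos (h : TAD V B z x k F) (i : Fin d) : ∃ j, j ≠ i ∧ 0 < B.repr (x i) j := by
  by_contra hc
  push Not at hc
  have h1 := lev_sum_repr_erase (B := B) i (x i)
  have h2 : ∑ j ∈ Finset.univ.erase i, B.repr (x i) j ≤ 0 :=
    Finset.sum_nonpos fun j hj => hc j (Finset.ne_of_mem_erase hj)
  have := h.xneg i
  rw [h.xl] at h1
  linarith

lemma TAD.k2 (hG : Good V) (h : TAD V B z x k F) (i : Fin d) : k i = 1 ∨ k i = 2 := by
  have h1 := (hG.cnt (h.Ffac i)).1 _ (h.fac.mem i)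
  have h2 := h.Flev i (B i)
  rw [lev_self] at h2
  simp at h2
  have h3 : k i ≤ 3 := by
    have : (k i : ℝ) ≤ 3 := by linarith
    exact_mod_cast this
  have h4 := h.k1 i
  have h5 : k i ≠ 3 := by
    intro h3
    obtain ⟨j, hji, hj⟩ := h.pos i
    have := hG.A1 (h.Ffac i) (h.fac.mem i) (by rw [h2, h3]; norm_num) j
    rw [h.Freprj i _ j hji, h3] at this
    simp [hji.symm] at this
    linarith
  omega

lemma TAD.kr (hG : Good V) (h : TAD V B z x k F) (i : Fin d) : (k i : ℝ) = 1 ∨ (k i : ℝ) = 2 := by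
  rcases h.k2 hG i with h | h <;> simp [h]

/-- if one positive coordinate of `x i` balances the negative one, all others vanish -/
lemma TAD.single (h : TAD V B z x k F) {i l : Fin d} (hli : l ≠ i)
    (he : B.repr (x i) l = - B.repr (x i) i) (m : Fin d) (hmi : m ≠ i) (hml : m ≠ l) :
    B.repr (x i) m = 0 := by
  classical
  have h1 := lev_sum_repr_erase (B := B) i (x i)
  rw [h.xl, ← Finset.add_sum_erase _ _ (show l ∈ Finset.univ.erase i by simp [hli])] at h1
  have h2 : ∑ j ∈ (Finset.univ.erase i).erase l, B.repr (x i) j = 0 := by linarith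
  rw [Finset.sum_eq_zero_iff_of_nonneg] at h2
  · exact h2 m (by simp [hmi, hml])
  · intro j hj
    exact h.xnn i j (by simp at hj; tauto)

lemma TAD.le_neg (h : TAD V B z x k F) {i l : Fin d} (hli : l ≠ i) :
    B.repr (x i) l ≤ - B.repr (x i) i := by
  classical
  have h1 := lev_sum_repr_erase (B := B) i (x i)
  rw [h.xl, ← Finset.add_sum_erase _ _ (show l ∈ Finset.univ.erase i by simp [hli])] at h1
  have h2 : 0 ≤ ∑ j ∈ (Finset.univ.erase i).erase l, B.repr (x i) j := by
    apply Finset.sum_nonneg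
    intro j hj
    exact h.xnn i j (by simp at hj; tauto)
  linarith

lemma TAD.A4 (hG : Good V) (h : TAD V B z x k F) {i j : Fin d} (hji : j ≠ i) :
    (k i : ℝ) * B.repr (x j) i = 0 ∨ (k i : ℝ) * B.repr (x j) i = 1 := by
  obtain ⟨n, hn⟩ := h.int i (hG.LP _ (h.xV j))
  have h1 := (hG.cnt (h.Ffac i)).1 _ (h.xV j)
  have h2 := h.Flev i (x j)
  rw [h.xl, hn] at h2
  have hnn := h.xnn j i hji.symm
  have hk := h.k1' i
  have h3 : (0 : ℝ) ≤ n := by rw [← hn]; nlinarith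
  have h3' : 0 ≤ n := by exact_mod_cast h3
  have h4 : n ≤ 2 := by
    have : (n : ℝ) ≤ 2 := by linarith
    exact_mod_cast this
  have h5 : n ≠ 2 := by
    rintro rfl
    have hA := hG.A1 (h.Ffac i) (h.xV j) (by rw [h2]; norm_num)
    obtain ⟨l, hli, hl⟩ := h.pos i
    have hlj : l = j := by
      by_contra hlj
      have := hA l
      rw [h.Freprj i _ l hli, hn] at this
      have := h.xnn j l hlj
      push_cast at *
      linarith
    subst hlj
    have hbal : B.repr (x i) l = - B.repr (x i) i := by
      classical
      have h1 := lev_sum_repr_erase (B := B) i (x i)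
      rw [h.xl, Finset.sum_eq_single_of_mem l (by simp [hli])] at h1
      · linarith
      · intro m hm hml
        have := hA m
        have hmi := Finset.ne_of_mem_erase hm
        rw [h.Freprj i _ m hmi, hn] at this
        have := h.xnn l m hml
        have := h.xnn i m hmi
        push_cast at *
        linarith
    have := hA l
    rw [h.Freprj i _ l hli, hn] at this
    obtain ⟨m, hm⟩ := h.int l (hG.LP _ (h.xV i))
    have e1 := h.kx i
    have e2 := h.kx l
    rcases h.kr hG i with hi | hi <;> rcases h.kr hG l with hl' | hl' <;>
      rw [hi] at e1 <;> rw [hl'] at e2 hm <;> push_cast at this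
    · linarith
    · linarith
    · have : (2 * m : ℝ) = 1 := by linarith
      have : 2 * m = 1 := by exact_mod_cast this
      omega
    · linarith
  rw [hn]
  obtain rfl | rfl : n = 0 ∨ n = 1 := by omega
  · left; simp
  · right; simp

end case1


section case1
variable {d : ℕ} {V : Finset (Fin d → ℝ)} {B : Module.Basis (Fin d) ℝ (Fin d → ℝ)}
variable {z : Fin d → ℝ} {x : Fin d → Fin d → ℝ} {k : Fin d → ℤ}
  {F : Fin d → Module.Basis (Fin d) ℝ (Fin d → ℝ)}

lemma TAD.half (hG : Good V) (h : TAD V B z x k F) {i : Fin d} (hi : (k i : ℝ) = 2) :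
    ∃ l, l ≠ i ∧ (k l : ℝ) = 2 ∧ B.repr (x i) l = 1/2 ∧ B.repr (x i) i = -1/2 ∧
      ∀ m, m ≠ i → m ≠ l → B.repr (x i) m = 0 := by
  obtain ⟨l, hli, hl⟩ := h.pos i
  have e1 := h.kx i
  have hle := h.le_neg hli
  rw [hi] at e1
  have key : (k l : ℝ) = 2 ∧ B.repr (x i) l = 1/2 := by
    rcases h.A4 hG hli.symm with e | e <;> rcases h.kr hG l with e' | e' <;> rw [e'] at e ⊢ <;>
      constructor <;> linarith
  exact ⟨l, hli, key.1, key.2, by linarith, h.single hli (by linarith)⟩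

lemma int_cases {r : ℝ} (h : ∃ n : ℤ, r = n) {a : ℤ} (h1 : (a : ℝ) < r + 1) (h2 : r < a + 1) :
    r = a := by
  obtain ⟨n, rfl⟩ := h
  have h1' : a < n + 1 := by exact_mod_cast h1
  have h2' : n < a + 1 := by exact_mod_cast h2
  have : n = a := by omega
  rw [this]

lemma TAD.k_eq_one (hG : Good V) (h : TAD V B z x k F) (i : Fin d) : k i = 1 := by
  classical
  rcases h.k2 hG i with h1 | h2
  · exact h1
  exfalso
  have hki : (k i : ℝ) = 2 := by rw [h2]; norm_num
  obtain ⟨l, hli, hkl, hxil, hxii, hxim⟩ := h.half hG hki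
  obtain ⟨m, hml, hkm, hxlm, hxll, hxl0⟩ := h.half hG hkl
  have hFl : ∀ v, (F i).repr v l = B.repr v l + B.repr v i := fun v => by
    rw [h.Freprj i v l hli, hki, hxil]; ring
  have hFm : ∀ v r, r ≠ i → r ≠ l → (F i).repr v r = B.repr v r := fun v r hr hr' => by
    rw [h.Freprj i v r hr, hki, hxim r hr hr']; ring
  have hFlev : ∀ v, lev (F i) v = lev B v - 2 * B.repr v i := fun v => by rw [h.Flev, hki]
  have hmi : m = i := by
    by_contra hmi
    have h0 : B.repr (x l) i = 0 := hxl0 i hli.symm (Ne.symm hmi)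
    obtain ⟨k', hk', hkx', B', hB', -, -, hl', -, -⟩ := hG.flip (h.Ffac i) (h.xV l)
      (by rw [hFlev, h0, h.xl]; ring) (i := l) (by rw [hFl, h0, hxll]; norm_num)
    rw [hFl, h0, hxll] at hkx'
    have := (hG.cnt hB').1 _ (h.fac.mem i)
    rw [hl', hFlev, hFl, lev_self] at this
    simp [hli.symm] at this
    linarith
  subst hmi
  have hFl' : ∀ v, (F l).repr v m = B.repr v m + B.repr v l := fun v => by
    rw [h.Freprj l v m hml, hkl, hxlm]; ring
  have hFlev' : ∀ v, lev (F l) v = lev B v - 2 * B.repr v l := fun v => by rw [h.Flev, hkl]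
  obtain ⟨k', hk', w, hw, M, hM, hM1, hM2, hM3, hM4⟩ := hG.nb _ (h.Ffac m) l
  have hk'1 : k' = 1 := by
    have := (hG.cnt hM).1 _ (h.fac.mem m)
    rw [hM4, hFlev, hFl, lev_self] at this
    simp [hml] at this
    have : (k' : ℝ) ≤ 1 := by linarith
    have : k' ≤ 1 := by exact_mod_cast this
    omega
  subst hk'1
  have hMlev : ∀ v, lev M v = lev B v - 3 * B.repr v m - B.repr v l := fun v => by
    rw [hM4, hFlev, hFl]; push_cast; ring
  -- integrality
  have hZc : ∀ v ∈ V, ∃ n : ℤ, B.repr v m + B.repr v l = n := by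
    intro v hv
    obtain ⟨a, ha⟩ := (h.Ffac m).int v (hG.LP v hv)
    obtain ⟨b, hb⟩ := hM.int v (hG.LP v hv)
    refine ⟨a - b, ?_⟩
    push_cast
    rw [← ha, ← hb, hM4, hFl]; push_cast; ring
  have hintm : ∀ v ∈ V, ∃ n : ℤ, 2 * B.repr v m = n := fun v hv => by
    have := h.int m (hG.LP v hv)
    rwa [hki] at this
  have hintl : ∀ v ∈ V, ∃ n : ℤ, 2 * B.repr v l = n := fun v hv => by
    have := h.int l (hG.LP v hv)
    rwa [hkl] at this
  have hMt : ∀ v ∈ V, lev B v ≤ -1 → lev M v = 1 → v = w := by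
    intro v hv hl h1
    obtain ⟨j, hj⟩ := hM.tight v hv h1
    by_cases hjl : j = l
    · rw [hj, hjl, hM1]
    · rw [hM2 j hjl] at hj
      have : lev (F m) v < 1 := h.Flt m hv hl
      rw [hj, lev_self] at this
      linarith
  have hwi : B.repr w m + B.repr w l < 0 := by rw [hFl] at hM3; linarith
  have hwe : ∀ j, w ≠ B j := by
    rintro j rfl
    have h1 : ∀ r, 0 ≤ B.repr (B j) r := fun r => by
      rw [B.repr_self, Finsupp.single_apply]; split_ifs <;> norm_num
    linarith [h1 m, h1 l]
  have hzne : ∀ j, z ≠ B j := by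
    rintro j rfl
    have := h.zl
    rw [lev_self] at this; norm_num at this
  -- lower bounds
  have hbz : -1 ≤ B.repr z m + B.repr z l := by
    have a1 := h.Flt m h.zV (by rw [h.zl]; norm_num)
    have a2 := h.Flt l h.zV (by rw [h.zl]; norm_num)
    rw [hFlev, h.zl] at a1
    rw [hFlev', h.zl] at a2
    have a3 := hM.le z h.zV
    rw [hMlev, h.zl] at a3
    have a4 := hintm z h.zV
    have a5 := hintl z h.zV
    have a6 := hZc z h.zV
    obtain ⟨n1, e1⟩ := a4
    obtain ⟨n2, e2⟩ := a5
    obtain ⟨n3, e3⟩ := a6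
    have b1 : -3 < n1 := by
      have : (-3 : ℝ) < n1 := by linarith
      exact_mod_cast this
    have b2 : -3 < n2 := by
      have : (-3 : ℝ) < n2 := by linarith
      exact_mod_cast this
    have b3 : n1 + n2 = 2 * n3 := by
      have : (n1 + n2 : ℝ) = 2 * n3 := by linarith
      exact_mod_cast this
    have b4 : -n1 - n3 ≤ 3 := by
      have : (-n1 - n3 : ℝ) ≤ 3 := by linarith
      exact_mod_cast this
    have : -1 ≤ n3 := by omega
    rw [e3]
    exact_mod_cast this
  have hby : ∀ v ∈ V, lev B v = -1 → -1 ≤ B.repr v m + B.repr v l ∧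
      (B.repr v m + B.repr v l = -1 → B.repr v m = -1/2 ∧ B.repr v l = -1/2 ∧ v = w) ∧
      (v ≠ w → 0 ≤ B.repr v m + B.repr v l) := by
    intro v hv hl
    have a1 := h.Flt m hv (by rw [hl])
    have a2 := h.Flt l hv (by rw [hl])
    rw [hFlev, hl] at a1
    rw [hFlev', hl] at a2
    have a4 := hintm v hv
    have a5 := hintl v hv
    have a6 := hZc v hv
    obtain ⟨n1, e1⟩ := a4
    obtain ⟨n2, e2⟩ := a5
    obtain ⟨n3, e3⟩ := a6
    have b1 : -2 < n1 := by
      have : (-2 : ℝ) < n1 := by linarith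
      exact_mod_cast this
    have b2 : -2 < n2 := by
      have : (-2 : ℝ) < n2 := by linarith
      exact_mod_cast this
    have b3 : n1 + n2 = 2 * n3 := by
      have : (n1 + n2 : ℝ) = 2 * n3 := by linarith
      exact_mod_cast this
    have b4 : -1 ≤ n3 := by omega
    have b5 : n3 = -1 → B.repr v m = -1/2 ∧ B.repr v l = -1/2 ∧ v = w := by
      intro hn
      have h1 : n1 = -1 := by omega
      have h2 : n2 = -1 := by omega
      have c1 : B.repr v m = -1/2 := by rw [h1] at e1; push_cast at e1; linarith
      have c2 : B.repr v l = -1/2 := by rw [h2] at e2; push_cast at e2; linarith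
      refine ⟨c1, c2, hMt v hv (by rw [hl]) ?_⟩
      rw [hMlev, hl, c1, c2]; norm_num
    rw [e3]
    refine ⟨by exact_mod_cast b4, fun hh => b5 (by exact_mod_cast hh), fun hh => ?_⟩
    by_contra hc
    push Not at hc
    have : n3 < 0 := by exact_mod_cast hc
    exact hh (b5 (by omega)).2.2
  have hxs : ∀ j, 0 ≤ B.repr (x j) m + B.repr (x j) l := by
    intro j
    by_cases hjm : j = m
    · subst hjm; rw [hxii, hxil]; norm_num
    · by_cases hjl : j = l
      · subst hjl; rw [hxlm, hxll]; norm_num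
      · exact add_nonneg (h.xnn j m (Ne.symm hjm)) (h.xnn j l (Ne.symm hjl))
  have hlevs : ∀ v ∈ V, (∃ j, v = B j) ∨ (∃ j, v = x j) ∨ lev B v = -1 ∨ v = z := by
    intro v hv
    obtain ⟨n, hn⟩ := h.fac.int v (hG.LP v hv)
    have a1 := h.fac.le v hv
    have a2 := (hG.cnt h.fac).1 v hv
    rw [hn] at a1 a2
    have a1' : n ≤ 1 := by exact_mod_cast a1
    have a2' : -2 ≤ n := by exact_mod_cast a2
    obtain rfl | rfl | rfl | rfl : n = 1 ∨ n = 0 ∨ n = -1 ∨ n = -2 := by omega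
    · left; exact h.fac.tight v hv (by rw [hn]; simp)
    · right; left; exact h.xsurj v hv (by rw [hn]; simp)
    · right; right; left; rw [hn]; simp
    · right; right; right
      exact (hG.cnt h.fac).2.1 v hv z h.zV (by rw [hn]; simp) h.zl
  let b : (Fin d → ℝ) → ℝ := fun v => (if v = B m then 1 else 0) + (if v = B l then 1 else 0)
    - (if v = z then 1 else 0) - (if v = w then 1 else 0)
  have hbV : ∑ v ∈ V, b v = 0 := by
    simp only [b, Finset.sum_add_distrib, Finset.sum_sub_distrib, Finset.sum_ite_eq',
      h.fac.mem, h.zV, hw, if_true]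
    norm_num
  have hsV : ∑ v ∈ V, (B.repr v m + B.repr v l) = 0 := by
    have h1 : ∀ r, ∑ v ∈ V, B.repr v r = 0 := by
      intro r
      have := congrArg (fun v => B.repr v r) hG.sum
      simpa using this
    rw [Finset.sum_add_distrib, h1, h1, add_zero]
  have hxe : ∀ j r, x j ≠ B r := by
    intro j r hh
    have := h.xl j
    rw [hh, lev_self] at this
    norm_num at this
  have hxz : ∀ j, x j ≠ z := by
    intro j hh
    have := h.xl j
    rw [hh, h.zl] at this
    norm_num at this
  have hle : ∀ v ∈ V, b v ≤ B.repr v m + B.repr v l := by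
    intro v hv
    rcases hlevs v hv with ⟨j, rfl⟩ | ⟨j, rfl⟩ | hl | rfl
    · have e1 : B j ≠ z := (hzne j).symm
      have e2 : B j ≠ w := (hwe j).symm
      have e3 : ∀ r, (B j = B r) = (j = r) := fun r => by
        rw [B.injective.eq_iff]
      simp only [b, e1, e2, if_false, e3, B.repr_self, Finsupp.single_apply]
      simp
    · have := hxs j
      simp only [b, hxe, hxz, if_false]
      split_ifs <;> linarith
    · have e1 : ∀ r, v ≠ B r := by
        rintro r rfl
        rw [lev_self] at hl; norm_num at hl
      have e2 : v ≠ z := by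
        rintro rfl
        rw [h.zl] at hl; norm_num at hl
      have := hby v hv hl
      simp only [b, e1, e2, if_false]
      split_ifs with hvw
      · linarith [this.1]
      · linarith [this.2.2 hvw]
    · simp only [b, hzne, if_false]
      split_ifs <;> linarith
  have heq := (Finset.sum_eq_sum_iff_of_le hle).1 (by rw [hbV, hsV])
  have hwz : w ≠ z := by
    intro hwz
    have := heq z h.zV
    simp [b, hzne, hwz] at this
    linarith
  have hsz : B.repr z m + B.repr z l = -1 := by
    have := heq z h.zV
    simp [b, hzne, hwz.symm] at this
    linarith
  have hsw : B.repr w m + B.repr w l = -1 := by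
    have := heq w hw
    simp [b, hwe, hwz] at this
    linarith
  have hwl : lev B w = -1 := by
    rcases hlevs w hw with ⟨j, hj⟩ | ⟨j, hj⟩ | hl | hz
    · exact absurd hj (hwe j)
    · have := hxs j
      rw [← hj, hsw] at this
      norm_num at this
    · exact hl
    · exact absurd hz hwz
  obtain ⟨-, hw2, -⟩ := hby w hw hwl
  obtain ⟨hwm, hwl', -⟩ := hw2 hsw
  have hx0 : ∀ j, j ≠ m → j ≠ l → B.repr (x j) m = 0 ∧ B.repr (x j) l = 0 := by
    intro j hjm hjl
    have e1 := h.xnn j m (Ne.symm hjm)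
    have e2 := h.xnn j l (Ne.symm hjl)
    have := heq _ (h.xV j)
    have hxw : x j ≠ w := by
      intro hh
      rw [← hh, h.xl] at hwl; norm_num at hwl
    simp [b, hxe, hxz, hxw] at this
    constructor <;> linarith
  have hwF : lev (F m) w = 0 := by rw [hFlev, hwl, hwm]; norm_num
  have hwFl : (F m).repr w l = -1 := by rw [hFl, hwm, hwl']; norm_num
  have hxF : ∀ j, j ≠ m → j ≠ l → lev (F m) (x j) = 0 := fun j hjm hjl => by
    rw [hFlev, h.xl, (hx0 j hjm hjl).1]; norm_num
  have hwnn : ∀ j, j ≠ m → j ≠ l → 0 ≤ B.repr w j := by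
    intro j hjm hjl
    by_contra hc
    push Not at hc
    have := hG.uniq (h.Ffac m) hw (h.xV j) hwF (hxF j hjm hjl) (i := j)
      (by rw [hFm _ _ hjm hjl]; exact hc) (by rw [hFm _ _ hjm hjl]; exact h.xneg j)
    rw [this, h.xl] at hwl
    norm_num at hwl
  have hsplit : ∀ v, lev B v = B.repr v m + (B.repr v l +
      ∑ j ∈ (Finset.univ.erase m).erase l, B.repr v j) := fun v => by
    rw [Finset.add_sum_erase _ _ (show l ∈ Finset.univ.erase m by simp [hli])]
    exact lev_sum_repr_erase m v
  have hw0 : ∀ j, j ≠ m → j ≠ l → B.repr w j = 0 := by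
    have h1 := hsplit w
    rw [hwl, hwm, hwl'] at h1
    have h2 : ∑ j ∈ (Finset.univ.erase m).erase l, B.repr w j = 0 := by linarith
    rw [Finset.sum_eq_zero_iff_of_nonneg] at h2
    · intro j hjm hjl
      exact h2 j (by simp [hjm, hjl])
    · intro j hj
      simp at hj
      exact hwnn j hj.2 hj.1
  have hzr : ∃ r, r ≠ m ∧ r ≠ l ∧ B.repr z r < 0 := by
    by_contra hc
    push Not at hc
    have h1 := hsplit z
    rw [h.zl] at h1
    have h2 : 0 ≤ ∑ j ∈ (Finset.univ.erase m).erase l, B.repr z j := by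
      apply Finset.sum_nonneg
      intro j hj
      simp at hj
      exact hc j hj.2 hj.1
    linarith
  obtain ⟨r, hrm, hrl, hzr⟩ := hzr
  -- coordinates of z
  have hzm : B.repr z m = -1/2 := by
    have a1 := hG.A1 h.fac h.zV h.zl m
    have a2 := hG.A1 h.fac h.zV h.zl l
    obtain ⟨n1, e1⟩ := hintm z h.zV
    have b1 : n1 ≤ 0 := by
      have : (n1 : ℝ) ≤ 0 := by linarith
      exact_mod_cast this
    have b2 : -2 ≤ n1 := by
      have : (-2 : ℝ) ≤ n1 := by linarith
      exact_mod_cast this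
    obtain rfl | rfl | rfl : n1 = 0 ∨ n1 = -1 ∨ n1 = -2 := by omega
    · exfalso
      push_cast at e1
      exact hwz (hG.uniq (h.Ffac l) hw h.zV (i := m) (by rw [hFlev', hwl, hwl']; norm_num)
        (by rw [hFlev', h.zl]; linarith) (by rw [hFl']; linarith) (by rw [hFl']; linarith))
    · push_cast at e1; linarith
    · exfalso
      push_cast at e1
      exact hwz (hG.uniq (h.Ffac m) hw h.zV (i := l) hwF
        (by rw [hFlev, h.zl]; linarith) (by rw [hFl]; linarith) (by rw [hFl]; linarith))
  obtain ⟨k2, -, hk2, N, hN, -, -, hNlev, -, hNr⟩ := hG.flip (h.Ffac m) hw hwF (i := l)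
    (by rw [hwFl]; norm_num)
  have hk2' : (k2 : ℝ) = 1 := by rw [hwFl] at hk2; linarith
  have hNr' : ∀ v, N.repr v r = B.repr v r := fun v => by
    rw [hNr v r hrl, hFm v r hrm hrl, hFm w r hrm hrl, hw0 r hrm hrl]; ring
  have hfin := hG.uniq hN h.zV (h.xV r) (i := r)
    (by rw [hNlev, hFlev, hFl, hk2', h.zl]; linarith)
    (by rw [hNlev, hFlev, hFl, hk2', h.xl, (hx0 r hrm hrl).1, (hx0 r hrm hrl).2]; norm_num)
    (by rw [hNr']; exact hzr) (by rw [hNr']; exact h.xneg r)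
  exact hxz r hfin.symm

end case1


/-- Combinatorial description in the even case. -/
def ResEven {d : ℕ} (V : Finset (Fin d → ℝ)) : Prop :=
  ∃ (B : Module.Basis (Fin d) ℝ (Fin d → ℝ)) (σ : Fin d → Fin d) (a b : Fin d),
    (∀ i, IsLP (B i)) ∧ (∀ v, IsLP v → ∀ i, ∃ n : ℤ, B.repr v i = n) ∧
    (∀ i, σ (σ i) = i) ∧ (∀ i, σ i ≠ i) ∧ σ a = b ∧
    ∀ v, v ∈ V ↔ (∃ i, v = B i) ∨ (∃ i, v = B (σ i) - B i) ∨
      (∃ i, i ≠ a ∧ i ≠ b ∧ v = -B i) ∨ v = -B a - B b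

section case1
variable {d : ℕ} {V : Finset (Fin d → ℝ)} {B : Module.Basis (Fin d) ℝ (Fin d → ℝ)}
variable {z : Fin d → ℝ} {σ : Fin d → Fin d}
  {F : Fin d → Module.Basis (Fin d) ℝ (Fin d → ℝ)}

/-- Refined data for a facet with a vertex at level `-2`. -/
structure TB (V : Finset (Fin d → ℝ)) (B : Module.Basis (Fin d) ℝ (Fin d → ℝ))
    (z : Fin d → ℝ) (σ : Fin d → Fin d)
    (F : Fin d → Module.Basis (Fin d) ℝ (Fin d → ℝ)) : Prop where
  fac : IsFac V B
  zV : z ∈ V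
  zl : lev B z = -2
  sne : ∀ i, σ i ≠ i
  xV : ∀ i, B (σ i) - B i ∈ V
  xsurj : ∀ v ∈ V, lev B v = 0 → ∃ i, v = B (σ i) - B i
  Ffac : ∀ i, IsFac V (F i)
  Flev : ∀ i v, lev (F i) v = lev B v - B.repr v i
  Frepri : ∀ i v, (F i).repr v i = - B.repr v i
  Freprs : ∀ i v, (F i).repr v (σ i) = B.repr v (σ i) + B.repr v i
  Freprj : ∀ i v j, j ≠ i → j ≠ σ i → (F i).repr v j = B.repr v j
  Flt : ∀ i, ∀ v ∈ V, lev B v ≤ -1 → lev (F i) v < 1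

lemma exists_TB (hG : Good V) (hB : IsFac V B) {z : Fin d → ℝ} (hz : z ∈ V)
    (hzl : lev B z = -2) : ∃ σ F, TB V B z σ F := by
  obtain ⟨x, k, F, h⟩ := exists_TAD hG hB hz hzl
  have hk : ∀ i, (k i : ℝ) = 1 := fun i => by rw [h.k_eq_one hG i]; simp
  have hs : ∀ i, ∃ j, j ≠ i ∧ x i = B j - B i := by
    intro i
    obtain ⟨l, hli, hl⟩ := h.pos i
    have e1 := h.kx i
    rw [hk, one_mul] at e1
    have e2 : B.repr (x i) l = 1 := by
      have := h.A4 hG hli.symm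
      rw [hk, one_mul] at this
      rcases this with h | h
      · linarith
      · exact h
    exact ⟨l, hli, basis_eq_sub hli.symm e1 e2 (h.single hli (by rw [e1, e2]; norm_num))⟩
  choose σ hs hx using hs
  refine ⟨σ, F, h.fac, h.zV, h.zl, hs, fun i => hx i ▸ h.xV i, fun v hv hl => ?_, h.Ffac,
    fun i v => ?_, fun i v => ?_, fun i v => ?_, fun i v j hj hj' => ?_, fun i v => h.Flt i⟩
  · obtain ⟨i, hi⟩ := h.xsurj v hv hl
    exact ⟨i, by rw [hi, hx]⟩
  · rw [h.Flev, hk, one_mul]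
  · rw [h.Frepri, hk, one_mul]
  · rw [h.Freprj _ _ _ (hs i), hk, hx i]
    simp [hs i]
  · rw [h.Freprj _ _ _ hj, hk, hx i]
    simp [hj.symm, hj'.symm]

lemma rx (p q m : Fin d) : B.repr (B p - B q) m =
    (if p = m then 1 else 0) - (if q = m then 1 else 0) := by
  simp [Finsupp.single_apply]

lemma rn (p m : Fin d) : B.repr (-B p) m = -(if p = m then 1 else 0) := by
  simp [Finsupp.single_apply]

lemma levx (p q : Fin d) : lev B (B p - B q) = 0 := by
  rw [map_sub, lev_self, lev_self, sub_self]

lemma levn (p : Fin d) : lev B (-B p) = -1 := by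
  rw [map_neg, lev_self]

lemma Good.L (hG : Good V) (hB : IsFac V B) {v w : Fin d → ℝ} (hv : v ∈ V) (hw : w ∈ V)
    (hwl : lev B w = 0) (hvl : lev B v = -1) {i : Fin d} (hwi : B.repr w i = -1)
    (hvi : B.repr v i ≤ -2) : False := by
  obtain ⟨k, hk1, hk, B', hB', h1, h2, h4, -, -⟩ := hG.flip hB hw hwl (i := i) (by rw [hwi]; norm_num)
  have hk' : (k : ℝ) = 1 := by rw [hwi] at hk; linarith
  have h5 := h4 v
  rw [hk', hvl] at h5
  obtain ⟨j, hj⟩ := hB'.tight v hv (le_antisymm (hB'.le v hv) (by rw [h5]; linarith))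
  by_cases hji : j = i
  · rw [hj, hji, h1, hwl] at hvl; norm_num at hvl
  · rw [hj, h2 j hji, lev_self] at hvl; norm_num at hvl

lemma TB.int (h : TB V B z σ F) (i : Fin d) {v : Fin d → ℝ} (hv : IsLP v) :
    ∃ n : ℤ, B.repr v i = n := by
  obtain ⟨n, hn⟩ := h.fac.int v hv
  obtain ⟨m, hm⟩ := (h.Ffac i).int v hv
  have := h.Flev i v
  exact ⟨n - m, by push_cast; rw [← hn, ← hm]; linarith⟩

lemma TB.ybd (hG : Good V) (h : TB V B z σ F) {y : Fin d → ℝ} (hy : y ∈ V) (hl : lev B y = -1)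
    (i : Fin d) : B.repr y i = -1 ∨ B.repr y i = 0 ∨ B.repr y i = 1 := by
  obtain ⟨n, hn⟩ := h.int i (hG.LP y hy)
  have h1 := h.Flt i y hy (by rw [hl])
  have h2 := (hG.cnt (h.Ffac i)).1 y hy
  rw [h.Flev, hl, hn] at h1 h2
  have h1' : -2 < n := by
    have : (-2 : ℝ) < n := by linarith
    exact_mod_cast this
  have h2' : n ≤ 1 := by
    have : (n : ℝ) ≤ 1 := by linarith
    exact_mod_cast this
  rw [hn]
  obtain rfl | rfl | rfl : n = -1 ∨ n = 0 ∨ n = 1 := by omega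
  all_goals simp

lemma TB.zbd (hG : Good V) (h : TB V B z σ F) (i : Fin d) :
    B.repr z i = -1 ∨ B.repr z i = 0 := by
  obtain ⟨n, hn⟩ := h.int i (hG.LP z h.zV)
  have h1 := h.Flt i z h.zV (by rw [h.zl]; norm_num)
  have h2 := hG.A1 h.fac h.zV h.zl i
  have h3 := hG.A1 h.fac h.zV h.zl (σ i)
  rw [h.Flev, h.zl, hn] at h1
  rw [hn] at h2
  have h1' : -3 < n := by
    have : (-3 : ℝ) < n := by linarith
    exact_mod_cast this
  have h2' : n ≤ 0 := by exact_mod_cast h2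
  have h4 : n ≠ -2 := by
    rintro rfl
    push_cast at hn
    have := hG.ge_neg_one (h.Ffac i) h.zV (by rw [h.Flev, h.zl, hn]; norm_num) (σ i)
    rw [h.Freprs, hn] at this
    linarith
  rw [hn]
  obtain rfl | rfl : n = -1 ∨ n = 0 := by omega
  all_goals simp

lemma TB.zform (hG : Good V) (h : TB V B z σ F) : ∃ a b, a ≠ b ∧ B.repr z a = -1 ∧
    B.repr z b = -1 ∧ ∀ i, i ≠ a → i ≠ b → B.repr z i = 0 := by
  classical
  have h0 : ∃ a, B.repr z a ≠ 0 := by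
    by_contra hc
    push Not at hc
    have := h.zl
    rw [lev_apply, Finset.sum_eq_zero (fun i _ => hc i)] at this
    norm_num at this
  obtain ⟨a, ha⟩ := h0
  have ha' := (h.zbd hG a).resolve_right ha
  have h1 := lev_sum_repr_erase (B := B) a z
  rw [h.zl, ha'] at h1
  have h2 : ∃ b ∈ Finset.univ.erase a, B.repr z b ≠ 0 := by
    by_contra hc
    push Not at hc
    rw [Finset.sum_eq_zero hc] at h1
    norm_num at h1
  obtain ⟨b, hb, hb0⟩ := h2
  have hb' := (h.zbd hG b).resolve_right hb0
  rw [← Finset.add_sum_erase _ _ hb, hb'] at h1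
  have h3 : ∑ j ∈ (Finset.univ.erase a).erase b, B.repr z j = 0 := by linarith
  rw [Finset.sum_eq_zero_iff_of_nonpos (fun i _ => hG.A1 h.fac h.zV h.zl i)] at h3
  exact ⟨a, b, (Finset.ne_of_mem_erase hb).symm, ha', hb', fun i hi hi' => h3 i (by simp [hi, hi'])⟩

lemma TB.ynp (hG : Good V) (h : TB V B z σ F) {y : Fin d → ℝ} (hy : y ∈ V) (hl : lev B y = -1)
    (l : Fin d) : B.repr y l ≤ 0 := by
  classical
  rcases h.ybd hG hy hl l with h1 | h1 | h1
  · rw [h1]; norm_num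
  · rw [h1]
  exfalso
  have hFl : lev (F l) y = -2 := by rw [h.Flev, hl, h1]; norm_num
  obtain ⟨σ', F', h'⟩ := exists_TB hG (h.Ffac l) hy hFl
  set t := σ l with ht
  have htl : t ≠ l := h.sne l
  have hyt : B.repr y t = -1 := by
    have := hG.A1 (h.Ffac l) hy hFl t
    rw [ht, h.Freprs, ← ht, h1] at this
    rcases h.ybd hG hy hl t with h2 | h2 | h2
    · exact h2
    all_goals linarith
  have hyj : ∀ j, j ≠ l → j ≠ t → B.repr y j ≤ 0 := by
    intro j hj hj'
    have := hG.A1 (h.Ffac l) hy hFl j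
    rwa [h.Freprj l y j hj hj'] at this
  have hsum := lev_sum_repr_erase (B := B) l y
  rw [← Finset.add_sum_erase _ _ (show t ∈ Finset.univ.erase l by simp [htl]), hl, h1, hyt] at hsum
  have hr : ∃ r ∈ (Finset.univ.erase l).erase t, B.repr y r ≠ 0 := by
    by_contra hc
    push Not at hc
    rw [Finset.sum_eq_zero hc] at hsum
    norm_num at hsum
  obtain ⟨r, hr, hr0⟩ := hr
  have hrt : r ≠ t := Finset.ne_of_mem_erase hr
  have hrl : r ≠ l := Finset.ne_of_mem_erase (Finset.mem_of_mem_erase hr)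
  have hyr : B.repr y r = -1 := by
    have := hyj r hrl hrt
    rcases h.ybd hG hy hl r with h2 | h2 | h2
    · exact h2
    · exact absurd h2 hr0
    · linarith
  rw [← Finset.add_sum_erase _ _ hr, hyr] at hsum
  have hy0 : ∀ j, j ≠ l → j ≠ t → j ≠ r → B.repr y j = 0 := by
    have h3 : ∑ j ∈ ((Finset.univ.erase l).erase t).erase r, B.repr y j = 0 := by linarith
    rw [Finset.sum_eq_zero_iff_of_nonpos] at h3
    · intro j a b c
      exact h3 j (by simp [a, b, c])
    · intro j hj
      simp at hj
      exact hyj j (by tauto) (by tauto)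
  have hyz : y ≠ z := by
    rintro rfl
    rw [h.zl] at hl; norm_num at hl
  have hzl : B.repr z l = -1 := by
    rcases h.zbd hG l with h2 | h2
    · exact h2
    · exact absurd ((hG.cnt (h.Ffac l)).2.1 y hy z h.zV hFl (by rw [h.Flev, h.zl, h2]; norm_num)) hyz
  have hzt : B.repr z t = 0 := by
    rcases h.zbd hG t with h2 | h2
    · exfalso
      have e := h.Freprs l z
      rw [← ht, h2, hzl] at e
      rcases h'.ybd hG h.zV (by rw [h.Flev, h.zl, hzl]; norm_num) t with h3 | h3 | h3 <;>
        rw [h3] at e <;> norm_num at e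
    · exact h2
  obtain ⟨σt, Ft, hT⟩ := exists_TB hG (h.Ffac t) h.zV (by rw [h.Flev, h.zl, hzt]; norm_num)
  have hyFt : lev (F t) y = 0 := by rw [h.Flev, hl, hyt]; norm_num
  have hs1 : σ t ≠ r := by
    intro hh
    have := hG.ge_neg_one (h.Ffac t) hy hyFt r
    rw [← hh, h.Freprs, hh, hyr, hyt] at this
    norm_num at this
  have hFyr : (F t).repr y r = -1 := by rw [h.Freprj t y r hrt hs1.symm, hyr]
  have hs2 : σ t = l := by
    by_contra hh
    have e : (F t).repr y (σ t) = -1 := by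
      rw [h.Freprs, hy0 (σ t) hh (h.sne t) hs1, hyt]; norm_num
    obtain ⟨i, hi⟩ := hT.xsurj y hy hyFt
    rw [hi, rx] at hFyr e
    have e1 : i = r := by
      by_contra hir
      rw [if_neg hir] at hFyr
      split_ifs at hFyr <;> norm_num at hFyr
    have e2 : i = σ t := by
      by_contra hir
      rw [if_neg hir] at e
      split_ifs at e <;> norm_num at e
    exact hs1 (by rw [← e1, ← e2])
  have hs3 : σ r = t := by
    by_contra hh
    have e : B.repr (B (σ r) - B r) t = 0 := by rw [rx, if_neg hh, if_neg hrt, sub_zero]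
    have := hG.uniq (h.Ffac t) hy (h.xV r) hyFt (by rw [h.Flev, levx, e, sub_zero]) (i := r)
      (by rw [hFyr]; norm_num)
      (by rw [h.Freprj t _ r hrt hs1.symm, rx, if_neg (h.sne r), if_pos rfl]; norm_num)
    rw [this, levx] at hl
    norm_num at hl
  have := hG.ge_neg_one (h.Ffac r) hy (by rw [h.Flev, hl, hyr]; norm_num) t
  rw [← hs3, h.Freprs, hs3, hyt, hyr] at this
  norm_num at this

lemma TB.yform (hG : Good V) (h : TB V B z σ F) {y : Fin d → ℝ} (hy : y ∈ V)
    (hl : lev B y = -1) : ∃ i, y = - B i := by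
  classical
  have h0 : ∃ a, B.repr y a ≠ 0 := by
    by_contra hc
    push Not at hc
    rw [lev_apply, Finset.sum_eq_zero (fun i _ => hc i)] at hl
    norm_num at hl
  obtain ⟨a, ha⟩ := h0
  have ha' : B.repr y a = -1 := by
    have := h.ynp hG hy hl a
    rcases h.ybd hG hy hl a with h2 | h2 | h2
    · exact h2
    · exact absurd h2 ha
    · linarith
  have h1 := lev_sum_repr_erase (B := B) a y
  rw [hl, ha'] at h1
  have h3 : ∑ j ∈ Finset.univ.erase a, B.repr y j = 0 := by linarith
  rw [Finset.sum_eq_zero_iff_of_nonpos (fun i _ => h.ynp hG hy hl i)] at h3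
  refine ⟨a, ?_⟩
  apply B.repr.injective
  ext i
  by_cases hia : i = a
  · subst hia; simp [ha']
  · rw [h3 i (by simp [hia]), rn, if_neg (Ne.symm hia), neg_zero]

end case1


section case1
variable {d : ℕ} {V : Finset (Fin d → ℝ)} {B : Module.Basis (Fin d) ℝ (Fin d → ℝ)}
variable {z : Fin d → ℝ} {σ : Fin d → Fin d}
  {F : Fin d → Module.Basis (Fin d) ℝ (Fin d → ℝ)}

lemma TB.levs (hG : Good V) (h : TB V B z σ F) {v : Fin d → ℝ} (hv : v ∈ V) :
    (∃ i, v = B i) ∨ (∃ i, v = B (σ i) - B i) ∨ (∃ i, -B i ∈ V ∧ v = - B i) ∨ v = z := by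
  obtain ⟨n, hn⟩ := h.fac.int v (hG.LP v hv)
  have a1 := h.fac.le v hv
  have a2 := (hG.cnt h.fac).1 v hv
  rw [hn] at a1 a2
  have a1' : n ≤ 1 := by exact_mod_cast a1
  have a2' : -2 ≤ n := by exact_mod_cast a2
  obtain rfl | rfl | rfl | rfl : n = 1 ∨ n = 0 ∨ n = -1 ∨ n = -2 := by omega
  · left; exact h.fac.tight v hv (by rw [hn]; simp)
  · right; left; exact h.xsurj v hv (by rw [hn]; simp)
  · right; right; left
    obtain ⟨i, hi⟩ := h.yform hG hv (by rw [hn]; simp)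
    exact ⟨i, hi ▸ hv, hi⟩
  · right; right; right
    exact (hG.cnt h.fac).2.1 v hv z h.zV (by rw [hn]; simp) h.zl

lemma TB.xinj (h : TB V B z σ F) : Function.Injective (fun i => B (σ i) - B i) := by
  intro i j hij
  by_contra hne
  have e := congrArg (fun v => B.repr v i) hij
  simp only [rx, if_neg (h.sne i), if_true, if_neg (Ne.symm hne)] at e
  split_ifs at e <;> norm_num at e

open Classical in
lemma TB.count (hG : Good V) (h : TB V B z σ F) (i : Fin d) :
    ((Finset.univ.filter (fun j => σ j = i)).card : ℝ) =
      (if -B i ∈ V then 1 else 0) - B.repr z i := by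
  have hV : V = Finset.univ.image B ∪ (Finset.univ.image (fun i => B (σ i) - B i) ∪
      ((Finset.univ.filter (fun j => -B j ∈ V)).image (fun j => -B j) ∪ {z})) := by
    ext v
    simp only [Finset.mem_union, Finset.mem_image, Finset.mem_univ, true_and, Finset.mem_filter,
      Finset.mem_singleton]
    constructor
    · intro hv
      rcases h.levs hG hv with ⟨j, hj⟩ | ⟨j, hj⟩ | ⟨j, hj, hj'⟩ | hz
      · exact Or.inl ⟨j, hj.symm⟩
      · exact Or.inr (Or.inl ⟨j, hj.symm⟩)
      · exact Or.inr (Or.inr (Or.inl ⟨j, hj, hj'.symm⟩))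
      · exact Or.inr (Or.inr (Or.inr hz))
    · rintro (⟨j, rfl⟩ | ⟨j, rfl⟩ | ⟨j, hj, rfl⟩ | rfl)
      · exact h.fac.mem j
      · exact h.xV j
      · exact hj
      · exact h.zV
  have hs : ∑ v ∈ V, B.repr v i = 0 := by
    have := congrArg (fun v => B.repr v i) hG.sum
    simpa using this
  rw [hV, Finset.sum_union, Finset.sum_union, Finset.sum_union, Finset.sum_image, Finset.sum_image,
    Finset.sum_image, Finset.sum_singleton] at hs
  · simp only [rx, rn, B.repr_self, Finsupp.single_apply, Finset.sum_sub_distrib,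
      Finset.sum_neg_distrib, Finset.sum_ite_eq', Finset.mem_univ, if_true, Finset.mem_filter,
      true_and, Finset.sum_boole] at hs
    linarith
  · intro p _ q _ hpq
    exact B.injective (neg_injective hpq)
  · intro p _ q _ hpq
    exact h.xinj hpq
  · intro p _ q _ hpq
    exact B.injective hpq
  · rw [Finset.disjoint_left]
    intro v hv hv'
    simp only [Finset.mem_union, Finset.mem_image, Finset.mem_univ, true_and, Finset.mem_filter,
      Finset.mem_singleton] at hv hv'
    obtain ⟨j, -, rfl⟩ := hv
    have := h.zl
    rw [← hv', levn] at this
    norm_num at this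
  · rw [Finset.disjoint_left]
    intro v hv hv'
    simp only [Finset.mem_union, Finset.mem_image, Finset.mem_univ, true_and, Finset.mem_filter,
      Finset.mem_singleton] at hv hv'
    obtain ⟨j, rfl⟩ := hv
    have e := levx (B := B) (σ j) j
    rcases hv' with ⟨q, -, hq⟩ | hq
    · rw [← hq, levn] at e; norm_num at e
    · rw [hq, h.zl] at e; norm_num at e
  · rw [Finset.disjoint_left]
    intro v hv hv'
    simp only [Finset.mem_union, Finset.mem_image, Finset.mem_univ, true_and, Finset.mem_filter,
      Finset.mem_singleton] at hv hv'
    obtain ⟨j, rfl⟩ := hv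
    have e := lev_self B j
    rcases hv' with ⟨q, hq⟩ | ⟨q, -, hq⟩ | hq
    · rw [← hq, levx] at e; norm_num at e
    · rw [← hq, levn] at e; norm_num at e
    · rw [hq, h.zl] at e; norm_num at e

lemma TB.inj_at (hG : Good V) (h : TB V B z σ F) {i p q : Fin d}
    (hi : B.repr z i = 0 ∨ -B i ∉ V) (hp : σ p = i) (hq : σ q = i) : p = q := by
  classical
  have h1 := h.count hG i
  have h2 : (Finset.univ.filter (fun j => σ j = i)).card ≤ 1 := by
    have : ((Finset.univ.filter (fun j => σ j = i)).card : ℝ) ≤ 1 := by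
      rw [h1]
      rcases h.zbd hG i with hz | hz
      · rcases hi with hi | hi
        · rw [hz] at hi; norm_num at hi
        · rw [if_neg hi, hz]; norm_num
      · rw [hz]; split_ifs <;> norm_num
    exact_mod_cast this
  exact Finset.card_le_one.1 h2 p (by simp [hp]) q (by simp [hq])

lemma TB.ss (hG : Good V) (h : TB V B z σ F) {i : Fin d} (hi : -B i ∈ V) : σ (σ i) = i := by
  by_contra hc
  have e : B.repr (B (σ (σ i)) - B (σ i)) i = 0 := by
    rw [rx, if_neg hc, if_neg (h.sne i), sub_zero]
  have := hG.uniq (h.Ffac i) hi (h.xV (σ i)) (by rw [h.Flev, levn, rn, if_pos rfl]; norm_num)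
    (by rw [h.Flev, levx, e, sub_zero]) (i := σ i)
    (by rw [h.Freprs, rn, rn, if_pos rfl, if_neg (h.sne i).symm]; norm_num)
    (by rw [h.Freprs, e, rx, if_neg (h.sne (σ i)), if_pos rfl]; norm_num)
  have := congrArg (lev B) this
  rw [levn, levx] at this
  norm_num at this

lemma TB.Q (hG : Good V) (h : TB V B z σ F) {a b : Fin d} (hab : a ≠ b) (ha : B.repr z a = -1)
    (hb : B.repr z b = -1) (hs : σ b = a) : σ a = b := by
  by_contra hc
  have e : B.repr (B (σ a) - B a) b = 0 := by rw [rx, if_neg hc, if_neg hab, sub_zero]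
  refine hG.L (h.Ffac b) h.zV (h.xV a) (i := a) (by rw [h.Flev, levx, e, sub_zero])
    (by rw [h.Flev, h.zl, hb]; norm_num) ?_ ?_
  · have := h.Freprs b (B (σ a) - B a)
    rw [hs] at this
    rw [this, e, rx, if_neg (h.sne a), if_pos rfl]; norm_num
  · have := h.Freprs b z
    rw [hs] at this
    rw [this, ha, hb]; norm_num

lemma TB.notU (hG : Good V) (h : TB V B z σ F) {a b : Fin d} (hab : a ≠ b)
    (ha : B.repr z a = -1) (hb : B.repr z b = -1)
    (h0 : ∀ i, i ≠ a → i ≠ b → B.repr z i = 0) : -B a ∉ V := by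
  intro hU
  have hsa := h.ss hG hU
  have hlev : lev (F a) (-B a) = 0 := by rw [h.Flev, levn, rn, if_pos rfl]; norm_num
  have hrep : (F a).repr (-B a) (σ a) = -1 := by
    rw [h.Freprs, rn, rn, if_pos rfl, if_neg (h.sne a).symm]; norm_num
  by_cases hs : σ a = b
  · refine hG.L (h.Ffac a) h.zV hU (i := b) hlev (by rw [h.Flev, h.zl, ha]; norm_num)
      (hs ▸ hrep) ?_
    have := h.Freprs a z
    rw [hs] at this
    rw [this, ha, hb]; norm_num
  · have hzs : B.repr z (σ a) = 0 := h0 _ (h.sne a) hs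
    obtain ⟨k, -, hk, G, hGf, -, -, hGl, -, hGr⟩ := hG.flip (h.Ffac a) hU hlev (i := σ a)
      (by rw [hrep]; norm_num)
    have hk' : (k : ℝ) = 1 := by rw [hrep] at hk; linarith
    have hGb : ∀ v, G.repr v b = B.repr v b := fun v => by
      rw [hGr v b (Ne.symm hs), h.Freprj a v b hab.symm (Ne.symm hs),
        h.Freprj a _ b hab.symm (Ne.symm hs), rn, if_neg hab]
      ring
    have hsb1 : σ b ≠ σ a := fun e => hab (h.inj_at hG (Or.inl hzs) rfl e)
    have hsb2 : σ b ≠ a := fun e => hs (h.Q hG hab ha hb e)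
    have := hG.uniq hGf h.zV (h.xV b) (i := b)
      (by rw [hGl, h.Flev, h.Freprs, hk', h.zl, hzs, ha]; norm_num)
      (by rw [hGl, h.Flev, h.Freprs, hk', levx, rx, rx, if_neg hsb1, if_neg hsb2,
            if_neg hab.symm, if_neg (Ne.symm hs)]; norm_num)
      (by rw [hGb, hb]; norm_num)
      (by rw [hGb, rx, if_neg (h.sne b), if_pos rfl]; norm_num)
    have e := h.zl
    rw [this, levx] at e
    norm_num at e

lemma case1 (hG : Good V) (hB : IsFac V B) {z : Fin d → ℝ} (hz : z ∈ V)
    (hzl : lev B z = -2) : ResEven V := by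
  classical
  obtain ⟨σ, F, h⟩ := exists_TB hG hB hz hzl
  obtain ⟨a, b, hab, ha, hb, h0⟩ := h.zform hG
  have haU := h.notU hG hab ha hb h0
  have hbU := h.notU hG hab.symm hb ha (fun i hi hi' => h0 i hi' hi)
  have hinj : Function.Injective σ := by
    intro p q hpq
    refine h.inj_at hG (i := σ q) ?_ hpq rfl
    by_cases e1 : σ q = a
    · right; rw [e1]; exact haU
    · by_cases e2 : σ q = b
      · right; rw [e2]; exact hbU
      · left; exact h0 _ e1 e2
  have hsurj : Function.Surjective σ := Finite.surjective_of_injective hinj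
  have hU : ∀ i, i ≠ a → i ≠ b → -B i ∈ V := by
    intro i hia hib
    by_contra hc
    have e := h.count hG i
    rw [if_neg hc, h0 i hia hib, sub_zero] at e
    obtain ⟨j, hj⟩ := hsurj i
    have : (Finset.univ.filter (fun j => σ j = i)).card = 0 := by exact_mod_cast e
    rw [Finset.card_eq_zero] at this
    have hm : j ∈ Finset.univ.filter (fun j => σ j = i) := by simp [hj]
    rw [this] at hm
    simp at hm
  have hsab : σ a = b := by
    by_contra hs
    have hsb : σ b ≠ a := fun e => hs (h.Q hG hab ha hb e)
    have hsij : σ b ≠ σ a := fun e => hab (hinj e).symm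
    have hxa : B.repr (B (σ b) - B b) a = 0 := by
      rw [rx, if_neg hsb, if_neg hab.symm, sub_zero]
    have hxb : B.repr (B (σ b) - B b) b = -1 := by
      rw [rx, if_neg (h.sne b), if_pos rfl]; norm_num
    have hxi : B.repr (B (σ b) - B b) (σ a) = 0 := by
      rw [rx, if_neg hsij, if_neg (Ne.symm hs), sub_zero]
    have hFb : ∀ v, (F a).repr v b = B.repr v b := fun v =>
      h.Freprj a v b hab.symm (Ne.symm hs)
    obtain ⟨k, -, hk, G, hGf, -, -, hGl, hGb, hGr⟩ := hG.flip (h.Ffac a) (h.xV b) (i := b)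
      (by rw [h.Flev, levx, hxa, sub_zero]) (by rw [hFb, hxb]; norm_num)
    have hk' : (k : ℝ) = 1 := by rw [hFb, hxb] at hk; linarith
    have hGl' : ∀ v, lev G v = lev B v - B.repr v a - B.repr v b := fun v => by
      rw [hGl, h.Flev, hFb, hk', one_mul]
    have hGb' : ∀ v, G.repr v b = - B.repr v b := fun v => by rw [hGb, hFb, hk', one_mul]
    have hGi : ∀ v, G.repr v (σ a) = B.repr v (σ a) + B.repr v a := fun v => by
      rw [hGr v _ hs, h.Freprs, h.Freprs, hxi, hxa]; ring
    have hzi : B.repr z (σ a) = 0 := h0 _ (h.sne a) hs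
    have hGzi : G.repr z (σ a) = -1 := by rw [hGi, hzi, ha]; norm_num
    obtain ⟨k2, -, hk2, H, hHf, -, -, hHl, -, hHr⟩ := hG.flip hGf h.zV (i := σ a)
      (by rw [hGl', h.zl, ha, hb]; norm_num) (by rw [hGzi]; norm_num)
    have hk2' : (k2 : ℝ) = 1 := by rw [hGzi] at hk2; linarith
    have hHl' : ∀ v, lev H v = lev B v - B.repr v a - B.repr v b - (B.repr v (σ a) + B.repr v a) :=
      fun v => by rw [hHl, hGl', hGi, hk2', one_mul]
    have hHb : ∀ v, H.repr v b = - B.repr v b + (B.repr v (σ a) + B.repr v a) := fun v => by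
      rw [hHr v b (Ne.symm hs), hGb', hGb', hGi, hk2', hb]; ring
    have hUi := hU (σ a) (h.sne a) hs
    have := hG.uniq hHf (h.fac.mem b) hUi (i := b)
      (by rw [hHl', lev_self]; simp [hab.symm, Ne.symm hs])
      (by rw [hHl', levn]; simp [rn, h.sne a, hs])
      (by rw [hHb]; simp [hab.symm, Ne.symm hs])
      (by rw [hHb]; simp [rn, h.sne a, hs])
    have := congrArg (lev B) this
    rw [lev_self, levn] at this
    norm_num at this
  have hsba : σ b = a := h.Q hG hab.symm hb ha hsab
  have hzf : z = -B a - B b := by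
    apply B.repr.injective
    ext i
    by_cases hia : i = a
    · subst hia; simp [ha, hab]
    · by_cases hib : i = b
      · subst hib; simp [hb, hia]
      · simp [h0 i hia hib, Ne.symm hia, Ne.symm hib]
  refine ⟨B, σ, a, b, fun i => hG.LP _ (h.fac.mem i), fun v hv i => h.int i hv, ?_, h.sne, hsab, ?_⟩
  · intro i
    by_cases hia : i = a
    · rw [hia, hsab, hsba]
    · by_cases hib : i = b
      · rw [hib, hsba, hsab]
      · exact h.ss hG (hU i hia hib)
  · intro v
    constructor
    · intro hv
      rcases h.levs hG hv with hj | hj | ⟨j, hj, hj'⟩ | hz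
      · exact Or.inl hj
      · exact Or.inr (Or.inl hj)
      · refine Or.inr (Or.inr (Or.inl ⟨j, ?_, ?_, hj'⟩))
        · rintro rfl; exact haU hj
        · rintro rfl; exact hbU hj
      · exact Or.inr (Or.inr (Or.inr (by rw [hz, hzf])))
    · rintro (⟨j, rfl⟩ | ⟨j, rfl⟩ | ⟨j, hj, hj', rfl⟩ | rfl)
      · exact h.fac.mem j
      · exact h.xV j
      · exact hU j hj hj'
      · rw [← hzf]; exact h.zV

lemma main_comb (hG : Good V) : ResEven V ∨ ResOdd V := by
  by_cases hex : ∃ B, IsFac V B ∧ ∃ z ∈ V, lev B z = -2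
  · obtain ⟨B, hB, z, hz, hl⟩ := hex
    exact Or.inl (case1 hG hB hz hl)
  · push Not at hex
    obtain ⟨B, hB⟩ := hG.ex
    refine Or.inr (case2 hG hB ?_)
    intro B hB v hv
    obtain ⟨n, hn⟩ := hB.int v (hG.LP v hv)
    have a2 := (hG.cnt hB).1 v hv
    have a3 := hex B hB v hv
    rw [hn] at a2 a3 ⊢
    have a2' : -2 ≤ n := by exact_mod_cast a2
    have a3' : n ≠ -2 := by
      rintro rfl
      exact a3 (by simp)
    have : -1 ≤ n := by omega
    exact_mod_cast this

end case1


section model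

lemma cycleType_invol {d : ℕ} (F : Equiv.Perm (Fin d)) (hF : ∀ i, F (F i) = i) :
    ∃ m, F.cycleType = Multiset.replicate m 2 ∧ 2 * m + (Finset.univ.filter (fun i => F i = i)).card = d := by
  have h2 : F ^ 2 = 1 := by ext i; simp [pow_two, hF]
  have h : F.cycleType = Multiset.replicate F.cycleType.card 2 := by
    rw [Multiset.eq_replicate_card]
    intro b hb
    have h1 := (Equiv.Perm.dvd_of_mem_cycleType hb).trans (orderOf_dvd_of_pow_eq_one h2)
    have h3 := Equiv.Perm.two_le_of_mem_cycleType hb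
    have := Nat.le_of_dvd (by norm_num) h1
    omega
  refine ⟨_, h, ?_⟩
  have hs := Equiv.Perm.sum_cycleType F
  rw [h, Multiset.sum_replicate, smul_eq_mul] at hs
  have : F.support = Finset.univ.filter (fun i => ¬ F i = i) := by ext i; simp
  rw [this] at hs
  have := Finset.card_filter_add_card_filter_not (s := (Finset.univ : Finset (Fin d))) (fun i => F i = i)
  rw [Finset.card_univ, Fintype.card_fin] at this
  omega

lemma conj_invol {d : ℕ} (f g : Fin d → Fin d) (hf : ∀ i, f (f i) = i) (hg : ∀ i, g (g i) = i)
    (hc : (Finset.univ.filter (fun i => f i = i)).card = (Finset.univ.filter (fun i => g i = i)).card) :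
    ∃ π : Equiv.Perm (Fin d), ∀ i, π (f i) = g (π i) := by
  let f' : Equiv.Perm (Fin d) := Function.Involutive.toPerm f hf
  let g' : Equiv.Perm (Fin d) := Function.Involutive.toPerm g hg
  obtain ⟨m, hm, hm'⟩ := cycleType_invol f' hf
  obtain ⟨n, hn, hn'⟩ := cycleType_invol g' hg
  have e1 : ∀ i, f' i = f i := fun i => rfl
  have e2 : ∀ i, g' i = g i := fun i => rfl
  simp only [e1] at hm'
  simp only [e2] at hn'
  have hmn : m = n := by omega
  have : IsConj f' g' := by
    rw [Equiv.Perm.isConj_iff_cycleType_eq, hm, hn, hmn]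
  obtain ⟨c, hc⟩ := isConj_iff.1 this
  refine ⟨c, fun i => ?_⟩
  have := congrArg (fun p : Equiv.Perm (Fin d) => p (c i)) hc
  simpa [e1, e2] using this

/-- standard vector with natural number index -/
def sv (d n : ℕ) : Fin d → ℝ := fun i => if (i : ℕ) = n then 1 else 0

lemma embed2_eq (d o : ℕ) (v : Fin 2 → ℤ) :
    embed2 d o v = (v 0 : ℝ) • sv d o + (v 1 : ℝ) • sv d (o + 1) := by
  ext i
  simp only [embed2, sv, Pi.add_apply, Pi.smul_apply, smul_eq_mul]
  split_ifs <;> first | omega | simp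

lemma embed3_eq (d : ℕ) (v : Fin 3 → ℤ) :
    embed3 d v = (v 0 : ℝ) • sv d 0 + (v 1 : ℝ) • sv d 1 + (v 2 : ℝ) • sv d 2 := by
  ext i
  simp only [embed3, sv, Pi.add_apply, Pi.smul_apply, smul_eq_mul]
  split_ifs <;> first | omega | simp

lemma hexa (d o : ℕ) (w : Fin d → ℝ) : w ∈ embed2 d o '' V2v ↔
    w = sv d o ∨ w = sv d (o+1) ∨ w = sv d o + sv d (o+1) ∨ w = -sv d o ∨ w = -sv d (o+1) ∨
      w = -sv d o - sv d (o+1) := by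
  simp [V2v, Set.image_insert_eq, embed2_eq, sub_eq_add_neg]

lemma penta (d : ℕ) (w : Fin d → ℝ) : w ∈ embed2 d 0 '' E2v ↔
    w = sv d 0 ∨ w = sv d 1 ∨ w = -sv d 0 + sv d 1 ∨ w = -sv d 0 - sv d 1 ∨ w = sv d 0 - sv d 1 := by
  simp [E2v, Set.image_insert_eq, embed2_eq, sub_eq_add_neg]

lemma q3 (d : ℕ) (w : Fin d → ℝ) : w ∈ embed3 d '' Q3v ↔
    w = sv d 0 ∨ w = -sv d 0 ∨ w = sv d 1 ∨ w = -sv d 1 ∨ w = sv d 0 + sv d 1 ∨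
      w = -sv d 0 - sv d 1 ∨ w = sv d 2 ∨ w = - sv d 2 := by
  simp [Q3v, Set.image_insert_eq, embed3_eq, sub_eq_add_neg]

/-- The coordinate map attached to a basis, a relabelling and signs. -/
lemma exists_phi {d : ℕ} (B : Module.Basis (Fin d) ℝ (Fin d → ℝ)) (hB : ∀ i, IsLP (B i))
    (hc : ∀ v, IsLP v → ∀ i, ∃ n : ℤ, B.repr v i = n) (π : Equiv.Perm (Fin d)) (s : ℕ → ℤ)
    (hs : ∀ n, s n = 1 ∨ s n = -1) :
    ∃ φ : (Fin d → ℝ) ≃ₗ[ℝ] (Fin d → ℝ), Unimodular φ ∧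
      ∀ i, φ (B i) = (s (π i) : ℝ) • sv d (π i) := by
  have hss : ∀ n, (s n : ℝ) * s n = 1 := fun n => by rcases hs n with h | h <;> simp [h]
  let φ : (Fin d → ℝ) ≃ₗ[ℝ] (Fin d → ℝ) :=
    { toFun := fun v n => s n * B.repr v (π.symm n)
      map_add' := fun v w => by ext n; simp [mul_add]
      map_smul' := fun r v => by ext n; simp; ring
      invFun := fun y => B.equivFun.symm (fun i => s (π i) * y (π i))
      left_inv := fun v => by
        apply B.equivFun.injective
        ext i
        simp [← mul_assoc, hss]
      right_inv := fun y => by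
        ext n
        have : ∀ c : Fin d → ℝ, ∀ i, B.repr (B.equivFun.symm c) i = c i := fun c i => by
          exact congrFun (B.equivFun.apply_symm_apply c) i
        simp only [this]
        simp [← mul_assoc, hss] }
  have hφ : ∀ v n, φ v n = s n * B.repr v (π.symm n) := fun v n => rfl
  refine ⟨φ, ?_, ?_⟩
  · intro v
    constructor
    · intro hv n
      obtain ⟨m, hm⟩ := hc v hv (π.symm n)
      exact ⟨s n * m, by rw [hφ, hm]; push_cast; rfl⟩
    · intro hv n
      have h1 : ∀ i, ∃ m : ℤ, B.repr v i = m := by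
        intro i
        obtain ⟨m, hm⟩ := hv (π i)
        rw [hφ, Equiv.symm_apply_apply] at hm
        refine ⟨s (π i) * m, ?_⟩
        push_cast
        rw [← hm, ← mul_assoc, hss, one_mul]
      have h2 := congrFun (B.sum_repr v) n
      rw [Finset.sum_apply] at h2
      rw [← h2]
      apply int_sum
      intro i _
      obtain ⟨m, hm⟩ := h1 i
      obtain ⟨r, hr⟩ := hB i n
      exact ⟨m * r, by rw [Pi.smul_apply, hm, hr, smul_eq_mul]; push_cast; rfl⟩
  · intro i
    ext n
    rw [hφ]
    simp only [B.repr_self, Finsupp.single_apply, sv, Pi.smul_apply, smul_eq_mul]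
    by_cases h : i = π.symm n
    · subst h; simp
    · have : ¬ ((n : ℕ) = (π i : ℕ)) := by
        intro h'
        apply h
        rw [Fin.ext h']; simp
      simp [h, this]

lemma model_even {d : ℕ} {V : Finset (Fin d → ℝ)} (hd : 3 ≤ d) (h : ResEven V) :
    Even d ∧ ∃ φ : (Fin d → ℝ) ≃ₗ[ℝ] (Fin d → ℝ), Unimodular φ ∧
        φ '' (V : Set (Fin d → ℝ)) = embed2 d 0 '' E2v ∪
          ⋃ j ∈ Finset.range ((d - 2) / 2), embed2 d (2 * j + 2) '' V2v := by
  obtain ⟨B, σ, a, b, hLP, hZc, hss, hne, hab, hV⟩ := h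
  have hba : σ b = a := by rw [← hab, hss]
  have hanb : a ≠ b := by rw [← hab]; exact (hne a).symm
  have hev : ∃ m, d = 2 * m := by
    obtain ⟨m, -, hm⟩ := cycleType_invol (Function.Involutive.toPerm σ hss) hss
    have : (Finset.univ.filter (fun i => (Function.Involutive.toPerm σ hss) i = i)).card = 0 := by
      rw [Finset.card_eq_zero, Finset.filter_eq_empty_iff]
      intro i _
      exact hne i
    exact ⟨m, by omega⟩
  obtain ⟨m, hm⟩ := hev
  refine ⟨⟨m, by omega⟩, ?_⟩
  let f : Fin d → Fin d := fun i => if i = a ∨ i = b then i else σ i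
  let t : ℕ → ℕ := fun n => if n % 2 = 0 then n + 1 else n - 1
  have ht : ∀ n : Fin d, t n < d := fun n => by
    have := n.2
    simp only [t]; split_ifs <;> omega
  let g : Fin d → Fin d := fun n => if (n : ℕ) < 2 then n else ⟨t n, ht n⟩
  have hf : ∀ i, f (f i) = i := by
    intro i
    by_cases hi : i = a ∨ i = b
    · simp [f, hi]
    · have : ¬ (σ i = a ∨ σ i = b) := by
        rintro (h | h)
        · exact hi (Or.inr (by rw [← hss i, h, hab]))
        · exact hi (Or.inl (by rw [← hss i, h, hba]))
      simp [f, hi, this, hss]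
  have hg : ∀ i, g (g i) = i := by
    intro n
    have hgv : ∀ n, (g n : ℕ) = if (n : ℕ) < 2 then (n : ℕ) else t n := fun n => by
      simp only [g]; split_ifs <;> rfl
    apply Fin.ext
    rw [hgv, hgv]
    simp only [t]
    split_ifs <;> omega
  have hcf : (Finset.univ.filter (fun i => f i = i)) = {a, b} := by
    ext i
    simp only [Finset.mem_filter, Finset.mem_univ, true_and, Finset.mem_insert,
      Finset.mem_singleton]
    by_cases hi : i = a ∨ i = b
    · simp only [f, if_pos hi, hi]
    · simp only [f, if_neg hi, hne, hi]
  have hcg : (Finset.univ.filter (fun i => g i = i)) = {⟨0, by omega⟩, ⟨1, by omega⟩} := by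
    ext n
    simp only [g, t, Finset.mem_filter, Finset.mem_univ, true_and, Finset.mem_insert,
      Finset.mem_singleton, Fin.ext_iff]
    split_ifs <;> simp at * <;> omega
  obtain ⟨π, hπ⟩ := conj_invol f g hf hg (by
    rw [hcf, hcg, Finset.card_pair hanb, Finset.card_pair (by simp)])
  have hfix : ∀ i, (i = a ∨ i = b) ↔ (π i : ℕ) < 2 := by
    intro i
    have e1 : f i = i ↔ (i = a ∨ i = b) := by
      by_cases hi : i = a ∨ i = b
      · simp [f, hi]
      · simp [f, hi, hne]
    have e2 : g (π i) = π i ↔ (π i : ℕ) < 2 := by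
      simp only [g, t, Fin.ext_iff]
      split_ifs <;> simp at * <;> omega
    rw [← e1, ← e2, ← hπ, π.injective.eq_iff]
  have hpa := (hfix a).1 (Or.inl rfl)
  have hpb := (hfix b).1 (Or.inr rfl)
  have hpab : (π a : ℕ) ≠ π b := fun h => hanb (π.injective (Fin.ext h))
  have hπs : ∀ i, (π (σ i) : ℕ) = t (π i) := by
    intro i
    by_cases hi : i = a ∨ i = b
    · rcases hi with rfl | rfl
      · rw [hab]; simp only [t]; split_ifs <;> omega
      · rw [hba]; simp only [t]; split_ifs <;> omega
    · have e := hπ i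
      have h2 : ¬ (π i : ℕ) < 2 := fun h => hi ((hfix i).2 h)
      simp only [f, g, if_neg hi, if_neg h2] at e
      rw [e]
  let s : ℕ → ℤ := fun n => if 2 ≤ n ∧ n % 2 = 1 then -1 else 1
  obtain ⟨φ, hφ, hφB⟩ := exists_phi B hLP hZc π s
    (fun n => by simp only [s]; split_ifs <;> simp)
  refine ⟨φ, hφ, ?_⟩
  let e : ℕ → Fin d → ℝ := fun n => (s n : ℝ) • sv d n
  have hW : ∀ w, w ∈ φ '' (V : Set (Fin d → ℝ)) ↔ (∃ n < d, w = e n) ∨ (∃ n < d, w = e (t n) - e n) ∨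
      (∃ n < d, 2 ≤ n ∧ w = - e n) ∨ w = -e 0 - e 1 := by
    intro w
    have hz : φ (-B a - B b) = -e 0 - e 1 := by
      rw [map_sub, map_neg, hφB, hφB]
      have : ((π a : ℕ) = 0 ∧ (π b : ℕ) = 1) ∨ ((π a : ℕ) = 1 ∧ (π b : ℕ) = 0) := by omega
      rcases this with ⟨h1, h2⟩ | ⟨h1, h2⟩ <;> rw [h1, h2]
      simp only [e]; abel
    constructor
    · rintro ⟨v, hv, rfl⟩
      rcases (hV v).1 hv with ⟨i, rfl⟩ | ⟨i, rfl⟩ | ⟨i, h1, h2, rfl⟩ | rfl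
      · exact Or.inl ⟨π i, (π i).2, hφB i⟩
      · refine Or.inr (Or.inl ⟨π i, (π i).2, ?_⟩)
        rw [map_sub, hφB, hφB, hπs]
      · refine Or.inr (Or.inr (Or.inl ⟨π i, (π i).2, ?_, by rw [map_neg, hφB]⟩))
        by_contra h
        rcases (hfix i).2 (by omega) with h | h <;> contradiction
      · exact Or.inr (Or.inr (Or.inr hz))
    · have hp : ∀ n (hn : n < d), (π (π.symm ⟨n, hn⟩) : ℕ) = n := fun n hn => by simp
      rintro (⟨n, hn, rfl⟩ | ⟨n, hn, rfl⟩ | ⟨n, hn, h2, rfl⟩ | rfl)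
      · exact ⟨B (π.symm ⟨n, hn⟩), (hV _).2 (Or.inl ⟨_, rfl⟩), by rw [hφB, hp]⟩
      · exact ⟨_, (hV _).2 (Or.inr (Or.inl ⟨π.symm ⟨n, hn⟩, rfl⟩)), by
          rw [map_sub, hφB, hφB, hπs, hp]⟩
      · refine ⟨_, (hV _).2 (Or.inr (Or.inr (Or.inl ⟨π.symm ⟨n, hn⟩, ?_, ?_, rfl⟩))), by
          rw [map_neg, hφB, hp]⟩
        · intro h
          have := (hfix _).1 (Or.inl h)
          rw [hp] at this; omega
        · intro h
          have := (hfix _).1 (Or.inr h)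
          rw [hp] at this; omega
      · exact ⟨_, (hV _).2 (Or.inr (Or.inr (Or.inr rfl))), hz⟩
  have e0 : e 0 = sv d 0 := by simp [e, s]
  have e1 : e 1 = sv d 1 := by simp [e, s]
  have e2 : ∀ j, e (2 * j + 2) = sv d (2 * j + 2) := fun j => by
    have : ¬ (2 ≤ 2 * j + 2 ∧ (2 * j + 2) % 2 = 1) := by omega
    simp only [e, s, if_neg this]; simp
  have e3 : ∀ j, e (2 * j + 3) = - sv d (2 * j + 3) := fun j => by
    have : (2 ≤ 2 * j + 3 ∧ (2 * j + 3) % 2 = 1) := by omega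
    simp only [e, s, if_pos this]; simp
  have t0 : t 0 = 1 := rfl
  have t1 : t 1 = 0 := rfl
  have t2 : ∀ j, t (2 * j + 2) = 2 * j + 3 := fun j => by simp only [t]; split_ifs <;> omega
  have t3 : ∀ j, t (2 * j + 3) = 2 * j + 2 := fun j => by simp only [t]; split_ifs <;> omega
  have hn : ∀ n < d, n = 0 ∨ n = 1 ∨ ∃ j < (d - 2) / 2, n = 2 * j + 2 ∨ n = 2 * j + 3 := by
    intro n hn
    by_cases h : n < 2
    · omega
    · exact Or.inr (Or.inr ⟨(n - 2) / 2, by omega, by omega⟩)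
  ext w
  rw [hW, Set.mem_union, penta]
  simp only [Set.mem_iUnion, Finset.mem_range, exists_prop, hexa]
  constructor
  · rintro (⟨n, hn', rfl⟩ | ⟨n, hn', rfl⟩ | ⟨n, hn', h2, rfl⟩ | rfl)
    · rcases hn n hn' with rfl | rfl | ⟨j, hj, rfl | rfl⟩
      · left; rw [e0]; simp
      · left; rw [e1]; simp
      · right; exact ⟨j, hj, by rw [e2]; simp⟩
      · right; exact ⟨j, hj, by rw [e3]; simp⟩
    · rcases hn n hn' with rfl | rfl | ⟨j, hj, rfl | rfl⟩
      · left; rw [t0, e0, e1]; right; right; left; abel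
      · left; rw [t1, e0, e1]; simp
      · right; exact ⟨j, hj, by rw [t2, e2, e3]; iterate 5 right
                                abel⟩
      · right; exact ⟨j, hj, by rw [t3, e2, e3]; right; right; left; abel⟩
    · rcases hn n hn' with rfl | rfl | ⟨j, hj, rfl | rfl⟩
      · omega
      · omega
      · right; exact ⟨j, hj, by rw [e2]; simp⟩
      · right; exact ⟨j, hj, by rw [e3]; simp⟩
    · left; rw [e0, e1]; simp
  · rintro ((rfl | rfl | rfl | rfl | rfl) | ⟨j, hj, (rfl | rfl | rfl | rfl | rfl | rfl)⟩)
    · exact Or.inl ⟨0, by omega, e0.symm⟩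
    · exact Or.inl ⟨1, by omega, e1.symm⟩
    · exact Or.inr (Or.inl ⟨0, by omega, by rw [t0, e0, e1]; abel⟩)
    · exact Or.inr (Or.inr (Or.inr (by rw [e0, e1])))
    · exact Or.inr (Or.inl ⟨1, by omega, by rw [t1, e0, e1]⟩)
    · exact Or.inl ⟨2 * j + 2, by omega, (e2 j).symm⟩
    · exact Or.inr (Or.inr (Or.inl ⟨2 * j + 3, by omega, by omega, by rw [e3]; simp⟩))
    · exact Or.inr (Or.inl ⟨2 * j + 3, by omega, by rw [t3, e2, e3]; abel⟩)
    · exact Or.inr (Or.inr (Or.inl ⟨2 * j + 2, by omega, by omega, by rw [e2]⟩))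
    · exact Or.inl ⟨2 * j + 3, by omega, (e3 j).symm⟩
    · exact Or.inr (Or.inl ⟨2 * j + 2, by omega, by rw [t2, e2, e3]; abel⟩)

lemma model_odd {d : ℕ} {V : Finset (Fin d → ℝ)} (hd : 3 ≤ d) (h : ResOdd V) :
    Odd d ∧ ∃ φ : (Fin d → ℝ) ≃ₗ[ℝ] (Fin d → ℝ), Unimodular φ ∧
        φ '' (V : Set (Fin d → ℝ)) = embed3 d '' Q3v ∪
          ⋃ j ∈ Finset.range ((d - 3) / 2), embed2 d (2 * j + 3) '' V2v := by
  obtain ⟨B, σ, o, hLP, hZc, hss, hfo, hV⟩ := h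
  have hcf : (Finset.univ.filter (fun i => σ i = i)) = {o} := by
    ext i
    simp only [Finset.mem_filter, Finset.mem_univ, true_and, Finset.mem_singleton, hfo]
  have hev : ∃ m, d = 2 * m + 1 := by
    obtain ⟨m, -, hm⟩ := cycleType_invol (Function.Involutive.toPerm σ hss) hss
    have : (Finset.univ.filter (fun i => (Function.Involutive.toPerm σ hss) i = i)).card = 1 := by
      rw [Finset.card_eq_one]
      exact ⟨o, hcf⟩
    exact ⟨m, by omega⟩
  obtain ⟨m, hm⟩ := hev
  refine ⟨⟨m, by omega⟩, ?_⟩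
  let t : ℕ → ℕ := fun n => if n = 0 then 1 else if n = 1 then 0 else if n = 2 then 2 else
    if n % 2 = 1 then n + 1 else n - 1
  have htc : ∀ n, (n = 0 ∧ t n = 1) ∨ (n = 1 ∧ t n = 0) ∨ (n = 2 ∧ t n = 2) ∨
      (3 ≤ n ∧ n % 2 = 1 ∧ t n = n + 1) ∨ (4 ≤ n ∧ n % 2 = 0 ∧ t n + 1 = n) := by
    intro n
    rcases (by omega : n = 0 ∨ n = 1 ∨ n = 2 ∨ 3 ≤ n) with h | h | h | h
    · subst h; simp [t]
    · subst h; simp [t]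
    · subst h; simp [t]
    · have h0 : n ≠ 0 := by omega
      have h1 : n ≠ 1 := by omega
      have h2 : n ≠ 2 := by omega
      have : t n = if n % 2 = 1 then n + 1 else n - 1 := by
        simp only [t, if_neg h0, if_neg h1, if_neg h2]
      by_cases h3 : n % 2 = 1
      · rw [if_pos h3] at this; omega
      · rw [if_neg h3] at this; omega
  have ht : ∀ n : Fin d, t n < d := fun n => by
    have := n.2
    have := htc n
    omega
  let g : Fin d → Fin d := fun n => ⟨t n, ht n⟩
  have hgv : ∀ n, (g n : ℕ) = t n := fun n => rfl
  have hg : ∀ i, g (g i) = i := by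
    intro n
    apply Fin.ext
    rw [hgv, hgv]
    have h1 := htc n
    have h2 := htc (t n)
    omega
  have hgf : ∀ n, g n = n ↔ (n : ℕ) = 2 := by
    intro n
    rw [Fin.ext_iff, hgv]
    have := htc n
    omega
  have hcg : (Finset.univ.filter (fun i => g i = i)) = {⟨2, by omega⟩} := by
    ext n
    simp only [Finset.mem_filter, Finset.mem_univ, true_and, Finset.mem_singleton, hgf,
      Fin.ext_iff]
  obtain ⟨π, hπ⟩ := conj_invol σ g hss hg (by
    rw [hcf, hcg, Finset.card_singleton, Finset.card_singleton])
  have hfix : ∀ i, i = o ↔ (π i : ℕ) = 2 := by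
    intro i
    rw [← hfo, ← hgf, ← hπ, π.injective.eq_iff]
  have hπs : ∀ i, (π (σ i) : ℕ) = t (π i) := fun i => by rw [hπ, hgv]
  let s : ℕ → ℤ := fun n => if n = 1 ∨ (4 ≤ n ∧ n % 2 = 0) then -1 else 1
  obtain ⟨φ, hφ, hφB⟩ := exists_phi B hLP hZc π s
    (fun n => by simp only [s]; split_ifs <;> simp)
  refine ⟨φ, hφ, ?_⟩
  let e : ℕ → Fin d → ℝ := fun n => (s n : ℝ) • sv d n
  have hW : ∀ w, w ∈ φ '' (V : Set (Fin d → ℝ)) ↔ (∃ n < d, w = e n) ∨ (∃ n < d, w = - e n) ∨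
      (∃ n < d, n ≠ 2 ∧ w = e (t n) - e n) := by
    intro w
    constructor
    · rintro ⟨v, hv, rfl⟩
      rcases (hV v).1 hv with ⟨i, rfl⟩ | ⟨i, rfl⟩ | ⟨i, h1, rfl⟩
      · exact Or.inl ⟨π i, (π i).2, hφB i⟩
      · exact Or.inr (Or.inl ⟨π i, (π i).2, by rw [map_neg, hφB]⟩)
      · refine Or.inr (Or.inr ⟨π i, (π i).2, fun h => h1 ((hfix i).2 h), ?_⟩)
        rw [map_sub, hφB, hφB, hπs]
    · have hp : ∀ n (hn : n < d), (π (π.symm ⟨n, hn⟩) : ℕ) = n := fun n hn => by simp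
      rintro (⟨n, hn, rfl⟩ | ⟨n, hn, rfl⟩ | ⟨n, hn, h2, rfl⟩)
      · exact ⟨B (π.symm ⟨n, hn⟩), (hV _).2 (Or.inl ⟨_, rfl⟩), by rw [hφB, hp]⟩
      · exact ⟨_, (hV _).2 (Or.inr (Or.inl ⟨π.symm ⟨n, hn⟩, rfl⟩)), by
          rw [map_neg, hφB, hp]⟩
      · refine ⟨_, (hV _).2 (Or.inr (Or.inr ⟨π.symm ⟨n, hn⟩, ?_, rfl⟩)), by
          rw [map_sub, hφB, hφB, hπs, hp]⟩
        intro h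
        have := (hfix _).1 h
        rw [hp] at this; omega
  have e0 : e 0 = sv d 0 := by simp [e, s]
  have e1 : e 1 = - sv d 1 := by simp [e, s]
  have e2 : e 2 = sv d 2 := by simp [e, s]
  have e3 : ∀ j, e (2 * j + 3) = sv d (2 * j + 3) := fun j => by
    have : ¬ (2 * j + 3 = 1 ∨ (4 ≤ 2 * j + 3 ∧ (2 * j + 3) % 2 = 0)) := by omega
    simp only [e, s, if_neg this]; simp
  have e4 : ∀ j, e (2 * j + 4) = - sv d (2 * j + 4) := fun j => by
    have : (2 * j + 4 = 1 ∨ (4 ≤ 2 * j + 4 ∧ (2 * j + 4) % 2 = 0)) := by omega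
    simp only [e, s, if_pos this]; simp
  have t0 : t 0 = 1 := rfl
  have t1 : t 1 = 0 := rfl
  have t3 : ∀ j, t (2 * j + 3) = 2 * j + 4 := fun j => by have := htc (2 * j + 3); omega
  have t4 : ∀ j, t (2 * j + 4) = 2 * j + 3 := fun j => by have := htc (2 * j + 4); omega
  have hn : ∀ n < d, n = 0 ∨ n = 1 ∨ n = 2 ∨
      ∃ j < (d - 3) / 2, n = 2 * j + 3 ∨ n = 2 * j + 4 := by
    intro n hn
    by_cases h : n < 3
    · omega
    · exact Or.inr (Or.inr (Or.inr ⟨(n - 3) / 2, by omega, by omega⟩))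
  ext w
  rw [hW, Set.mem_union, q3]
  simp only [Set.mem_iUnion, Finset.mem_range, exists_prop, hexa]
  constructor
  · rintro (⟨n, hn', rfl⟩ | ⟨n, hn', rfl⟩ | ⟨n, hn', h2, rfl⟩)
    · rcases hn n hn' with rfl | rfl | rfl | ⟨j, hj, rfl | rfl⟩
      · left; rw [e0]; simp
      · left; rw [e1]; simp
      · left; rw [e2]; simp
      · right; exact ⟨j, hj, by rw [e3]; simp⟩
      · right; exact ⟨j, hj, by rw [e4]; simp⟩
    · rcases hn n hn' with rfl | rfl | rfl | ⟨j, hj, rfl | rfl⟩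
      · left; rw [e0]; simp
      · left; rw [e1]; simp
      · left; rw [e2]; simp
      · right; exact ⟨j, hj, by rw [e3]; simp⟩
      · right; exact ⟨j, hj, by rw [e4]; simp⟩
    · rcases hn n hn' with rfl | rfl | rfl | ⟨j, hj, rfl | rfl⟩
      · left; rw [t0, e0, e1]; iterate 5 right
        left; abel
      · left; rw [t1, e0, e1]; iterate 4 right
        left; abel
      · omega
      · right; exact ⟨j, hj, by rw [t3, e3, e4]; iterate 5 right
                                abel⟩
      · right; exact ⟨j, hj, by rw [t4, e3, e4]; right; right; left; abel⟩
  · rintro ((rfl | rfl | rfl | rfl | rfl | rfl | rfl | rfl) |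
      ⟨j, hj, (rfl | rfl | rfl | rfl | rfl | rfl)⟩)
    · exact Or.inl ⟨0, by omega, e0.symm⟩
    · exact Or.inr (Or.inl ⟨0, by omega, by rw [e0]⟩)
    · exact Or.inr (Or.inl ⟨1, by omega, by rw [e1, neg_neg]⟩)
    · exact Or.inl ⟨1, by omega, e1.symm⟩
    · exact Or.inr (Or.inr ⟨1, by omega, by omega, by rw [t1, e0, e1]; abel⟩)
    · exact Or.inr (Or.inr ⟨0, by omega, by omega, by rw [t0, e0, e1]; abel⟩)
    · exact Or.inl ⟨2, by omega, e2.symm⟩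
    · exact Or.inr (Or.inl ⟨2, by omega, by rw [e2]⟩)
    · exact Or.inl ⟨2 * j + 3, by omega, (e3 j).symm⟩
    · exact Or.inr (Or.inl ⟨2 * j + 4, by omega, by rw [e4]; simp⟩)
    · exact Or.inr (Or.inr ⟨2 * j + 4, by omega, by omega, by rw [t4, e3, e4]; abel⟩)
    · exact Or.inr (Or.inl ⟨2 * j + 3, by omega, by rw [e3]⟩)
    · exact Or.inl ⟨2 * j + 4, by omega, (e4 j).symm⟩
    · exact Or.inr (Or.inr ⟨2 * j + 3, by omega, by omega, by rw [t3, e3, e4]; abel⟩)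

end model


/-- a `d ≥ 3`-dimensional simplicial reflexive polytope with `3d-1` vertices
and `ν_P = 0` splits into `(d-2)/2` copies of `V₂` and one `E₂` (`d` even), or into
`(d-3)/2` copies of `V₂` and one `Q₃` (`d` odd). -/
theorem stmt18 {d : ℕ} (hd : 3 ≤ d)
    (P : Set (Fin d → ℝ)) (hP : IsReflexive P) (hs : IsSimplicial P)
    (hcard : (Set.extremePoints ℝ P).ncard = 3 * d - 1)
    (V : Finset (Fin d → ℝ)) (hV : (V : Set (Fin d → ℝ)) = Set.extremePoints ℝ P)
    (hnu : ∑ v ∈ V, v = 0) :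
    (Even d ∧ ∃ φ : (Fin d → ℝ) ≃ₗ[ℝ] (Fin d → ℝ), Unimodular φ ∧
        φ '' P = splitModel2 d E2v) ∨
    (Odd d ∧ ∃ φ : (Fin d → ℝ) ≃ₗ[ℝ] (Fin d → ℝ), Unimodular φ ∧
        φ '' P = splitModel3 d Q3v) := by
  have hG := good_of hd hP hs hcard hV hnu
  have hH := P_eq_hull hP hV
  have key : ∀ φ : (Fin d → ℝ) ≃ₗ[ℝ] (Fin d → ℝ), φ '' P = convexHull ℝ (φ '' (V : Set (Fin d → ℝ))) := by
    intro φ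
    rw [hH]
    exact (φ : (Fin d → ℝ) →ₗ[ℝ] (Fin d → ℝ)).image_convexHull _
  rcases main_comb hG with h | h
  · left
    obtain ⟨h1, φ, h2, h3⟩ := model_even hd h
    exact ⟨h1, φ, h2, by rw [key, h3, splitModel2]⟩
  · right
    obtain ⟨h1, φ, h2, h3⟩ := model_odd hd h
    exact ⟨h1, φ, h2, by rw [key, h3, splitModel3]⟩
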